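/- Let r ≥ 2 and let H be a 3-partite 3-graph with vertex classes A, B, C such that |A| = n, and let ε ≥ 0. Suppose every vertex of A has degree at least r and every vertex of B ∪ C has degree at most r. If ν(H) ≤ (1 + ε)·n/2, then H contains at least (1 − (72r² − 150r + 77)ε)·n/2 pairwise disjoint subhypergraphs each isomorphic to (r/2)·F, where F is the truncated Fano plane. -/

import Mathlib

namespace Tripartite

/-- The degree of a vertex `a` in the first class of a 3-partite 3-multihypergraph,
whose edges are given as a multiset of triples (so parallel edges are allowed). -/
def deg1 {α β γ : Type*} [DecidableEq α] (H : Multiset (α × β × γ)) (a : α) : ℕ :=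
  (H.filter fun e => e.1 = a).card

/-- The degree of a vertex `b` in the second class. -/
def deg2 {α β γ : Type*} [DecidableEq β] (H : Multiset (α × β × γ)) (b : β) : ℕ :=
  (H.filter fun e => e.2.1 = b).card

/-- The degree of a vertex `c` in the third class. -/
def deg3 {α β γ : Type*} [DecidableEq γ] (H : Multiset (α × β × γ)) (c : γ) : ℕ :=
  (H.filter fun e => e.2.2 = c).card

/-- `H` is `r`-regular: every vertex of every class has degree exactly `r`. -/
def IsRegular {α β γ : Type*} [DecidableEq α] [DecidableEq β] [DecidableEq γ]
    (H : Multiset (α × β × γ)) (r : ℕ) : Prop :=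
  (∀ a, deg1 H a = r) ∧ (∀ b, deg2 H b = r) ∧ (∀ c, deg3 H c = r)

/-- A matching of `H`: a set of edges of `H` that are pairwise disjoint. -/
def IsMatching {α β γ : Type*} (H : Multiset (α × β × γ)) (M : Finset (α × β × γ)) : Prop :=
  (∀ e ∈ M, e ∈ H) ∧
  ∀ e ∈ M, ∀ f ∈ M, e ≠ f → e.1 ≠ f.1 ∧ e.2.1 ≠ f.2.1 ∧ e.2.2 ≠ f.2.2

/-- The matching number ν(H): the maximum size of a matching of `H`. -/
noncomputable def matchNum {α β γ : Type*} (H : Multiset (α × β × γ)) : ℕ :=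
  sSup {k | ∃ M : Finset (α × β × γ), IsMatching H M ∧ M.card = k}

/-- The edge multiset of the truncated Fano plane `F` on vertices `x1, y1` (first class),
`x2, y2` (second class), `x3, y3` (third class). -/
def fanoEdges {α β γ : Type*} (x1 y1 : α) (x2 y2 : β) (x3 y3 : γ) :
    Multiset (α × β × γ) :=
  {(x1, x2, x3), (x1, y2, y3), (y1, x2, y3), (y1, y2, x3)}

/-- The six vertices `x1, y1, x2, y2, x3, y3` span a copy of `s • F` in `H`, i.e. a
subhypergraph in which every edge of the truncated Fano plane appears with
multiplicity (at least) `s`. -/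
def IsFanoCopy {α β γ : Type*} (H : Multiset (α × β × γ)) (s : ℕ)
    (x1 y1 : α) (x2 y2 : β) (x3 y3 : γ) : Prop :=
  x1 ≠ y1 ∧ x2 ≠ y2 ∧ x3 ≠ y3 ∧ s • fanoEdges x1 y1 x2 y2 x3 y3 ≤ H

/-- The six vertices `x1, y1, x2, y2, x3, y3` span a connected component of `H` that is a
copy of `s • F`: the multiset of edges of `H` meeting one of these six vertices is exactly
`s` parallel copies of each of the four edges of the truncated Fano plane. -/
def IsFanoComponent {α β γ : Type*} [DecidableEq α] [DecidableEq β] [DecidableEq γ]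
    (H : Multiset (α × β × γ)) (s : ℕ)
    (x1 y1 : α) (x2 y2 : β) (x3 y3 : γ) : Prop :=
  x1 ≠ y1 ∧ x2 ≠ y2 ∧ x3 ≠ y3 ∧
  H.filter (fun e => e.1 = x1 ∨ e.1 = y1 ∨ e.2.1 = x2 ∨ e.2.1 = y2 ∨
      e.2.2 = x3 ∨ e.2.2 = y3)
    = s • fanoEdges x1 y1 x2 y2 x3 y3

set_option linter.unusedSectionVars false
set_option linter.unusedDecidableInType false
set_option linter.unusedFintypeInType false

section Homology

variable {ι β γ : Type*} [DecidableEq ι] [DecidableEq β] [DecidableEq γ]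

/-- The edges of `G` disjoint from `f`. -/
def away (bb : ι → β) (cc : ι → γ) (G : Finset ι) (f : ι) : Finset ι :=
  G.filter fun g => bb g ≠ bb f ∧ cc g ≠ cc f

/-- A recursive certificate that the matching complex of `G` is `k`-fold acyclic: an isolated
edge is a cone point, and an edge may be deleted when its link is acyclic enough. -/
inductive Good (bb : ι → β) (cc : ι → γ) : Finset ι → ℕ → Prop
  | zero (G : Finset ι) : Good bb cc G 0
  | iso (G : Finset ι) (e : ι) (k : ℕ) : e ∈ G →
      (∀ g ∈ G, g ≠ e → bb g ≠ bb e ∧ cc g ≠ cc e) → Good bb cc G k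
  | step (G : Finset ι) (f : ι) (k : ℕ) : f ∈ G → Good bb cc (G.erase f) (k + 1) →
      Good bb cc (away bb cc G f) k → Good bb cc G (k + 1)

theorem Good.mono {bb : ι → β} {cc : ι → γ} {G : Finset ι} {k : ℕ} (h : Good bb cc G k) :
    ∀ j ≤ k, Good bb cc G j := by
  induction h with
  | zero G => intro j hj; obtain rfl : j = 0 := by omega
              exact Good.zero G
  | iso G e k he hiso => intro j _; exact Good.iso G e j he hiso
  | step G f k hf _ _ ih1 ih2 =>
    intro j hj
    cases j with
    | zero => exact Good.zero G
    | succ j => exact Good.step G f j hf (ih1 _ hj) (ih2 _ (by omega))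

theorem Good.eq_zero_of_empty {bb : ι → β} {cc : ι → γ} {G : Finset ι} {k : ℕ}
    (h : Good bb cc G k) (hG : G = ∅) : k = 0 := by
  induction h with
  | zero => rfl
  | iso G e k he _ => simp [hG] at he
  | step G f k hf _ _ _ _ => simp [hG] at hf

theorem Good.map {ι' β' γ' : Type*} [DecidableEq ι'] [DecidableEq β'] [DecidableEq γ']
    {bb : ι → β} {cc : ι → γ} {bb' : ι' → β'} {cc' : ι' → γ'} (j : ι ↪ ι')
    (hb : ∀ x y, bb' (j x) = bb' (j y) ↔ bb x = bb y)
    (hc : ∀ x y, cc' (j x) = cc' (j y) ↔ cc x = cc y)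
    {G : Finset ι} {k : ℕ} (h : Good bb cc G k) : Good bb' cc' (G.map j) k := by
  induction h with
  | zero G => exact Good.zero _
  | iso G e k he hiso =>
    refine Good.iso _ (j e) k (Finset.mem_map_of_mem j he) ?_
    intro g hg hne
    obtain ⟨x, hx, rfl⟩ := Finset.mem_map.1 hg
    have := hiso x hx (fun h => hne (by rw [h]))
    exact ⟨fun h => this.1 ((hb _ _).1 h), fun h => this.2 ((hc _ _).1 h)⟩
  | step G f k hf _ _ ih1 ih2 =>
    refine Good.step _ (j f) k (Finset.mem_map_of_mem j hf) ?_ ?_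
    · rwa [Finset.map_erase] at ih1
    · convert ih2 using 1
      ext x
      simp only [away, Finset.mem_filter, Finset.mem_map]
      constructor
      · rintro ⟨⟨y, hy, rfl⟩, h1, h2⟩
        exact ⟨y, ⟨hy, fun h => h1 ((hb _ _).2 h), fun h => h2 ((hc _ _).2 h)⟩, rfl⟩
      · rintro ⟨y, ⟨hy, h1, h2⟩, rfl⟩
        exact ⟨⟨y, hy, rfl⟩, fun h => h1 ((hb _ _).1 h), fun h => h2 ((hc _ _).1 h)⟩

/-- `σ` is a matching of the bipartite multigraph with end maps `bb` and `cc`. -/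
def IsM (bb : ι → β) (cc : ι → γ) (σ : Finset ι) : Prop :=
  Set.InjOn bb σ ∧ Set.InjOn cc σ

theorem IsM.mono {bb : ι → β} {cc : ι → γ} {σ τ : Finset ι} (h : IsM bb cc σ) (hs : τ ⊆ σ) :
    IsM bb cc τ :=
  ⟨h.1.mono (by exact_mod_cast hs), h.2.mono (by exact_mod_cast hs)⟩

theorem IsM.insert {bb : ι → β} {cc : ι → γ} {σ : Finset ι} (h : IsM bb cc σ) {v : ι}
    (hv : ∀ g ∈ σ, bb g ≠ bb v ∧ cc g ≠ cc v) : IsM bb cc (insert v σ) := by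
  constructor
  · intro x hx y hy hxy
    simp only [Finset.coe_insert, Set.mem_insert_iff, Finset.mem_coe] at hx hy
    rcases hx with rfl | hx <;> rcases hy with rfl | hy
    · rfl
    · exact absurd hxy.symm (hv y hy).1
    · exact absurd hxy (hv x hx).1
    · exact h.1 hx hy hxy
  · intro x hx y hy hxy
    simp only [Finset.coe_insert, Set.mem_insert_iff, Finset.mem_coe] at hx hy
    rcases hx with rfl | hx <;> rcases hy with rfl | hy
    · rfl
    · exact absurd hxy.symm (hv y hy).2
    · exact absurd hxy (hv x hx).2
    · exact h.2 hx hy hxy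

variable [Fintype ι]

/-- The boundary operator on chains mod 2, extended to all finite sets. -/
def bd (z : Finset ι → ZMod 2) (τ : Finset ι) : ZMod 2 :=
  ∑ v, if v ∈ τ then 0 else z (insert v τ)

theorem bd_add (z w : Finset ι → ZMod 2) : bd (z + w) = bd z + bd w := by
  funext τ
  simp only [bd, Pi.add_apply, ← Finset.sum_add_distrib]
  refine Finset.sum_congr rfl fun v _ => ?_
  split_ifs <;> simp

theorem bd_sum {κ : Type*} (s : Finset κ) (z : κ → Finset ι → ZMod 2) :
    bd (∑ i ∈ s, z i) = ∑ i ∈ s, bd (z i) := by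
  classical
  induction s using Finset.induction_on with
  | empty => funext τ; simp [bd]
  | insert a s ha ih => rw [Finset.sum_insert ha, Finset.sum_insert ha, bd_add, ih]

theorem sum_symm_eq_zero {κ : Type*} [DecidableEq κ] (s : Finset κ) (f : κ → κ → ZMod 2)
    (h0 : ∀ a, f a a = 0) (hs : ∀ a b, f a b = f b a) : ∑ a ∈ s, ∑ b ∈ s, f a b = 0 := by
  rw [← Finset.sum_product']
  refine Finset.sum_involution (fun x _ => (x.2, x.1)) ?_ ?_ ?_ ?_
  · rintro ⟨a, b⟩ _
    simp only [hs b a]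
    exact CharTwo.add_self_eq_zero _
  · rintro ⟨a, b⟩ _ hne heq
    simp only [Prod.mk.injEq] at heq
    obtain ⟨rfl, _⟩ := heq
    exact hne (h0 _)
  · rintro ⟨a, b⟩ h
    simp only [Finset.mem_product] at h ⊢
    exact ⟨h.2, h.1⟩
  · rintro ⟨a, b⟩ _; rfl

theorem bd_bd (z : Finset ι → ZMod 2) : bd (bd z) = 0 := by
  funext τ
  have : bd (bd z) τ = ∑ v, ∑ w, if v ∈ τ ∨ w ∈ τ ∨ v = w then 0
      else z (insert w (insert v τ)) := by
    unfold bd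
    refine Finset.sum_congr rfl fun v _ => ?_
    by_cases hv : v ∈ τ
    · simp [hv]
    · simp only [hv, if_false, false_or]
      refine Finset.sum_congr rfl fun w _ => ?_
      by_cases hw : w ∈ τ
      · simp [hw]
      · by_cases hvw : v = w
        · simp [hvw]
        · simp [hw, hvw, Ne.symm hvw]
  rw [this]
  refine sum_symm_eq_zero _ _ (by simp) fun a b => ?_
  rw [Finset.insert_comm]
  congr 1
  simp only [eq_iff_iff]
  constructor <;> (rintro (h | h | h) <;> simp [h])

/-- The chain `z` is supported on matchings of size `k` inside `G`. -/
def Supp (bb : ι → β) (cc : ι → γ) (G : Finset ι) (k : ℕ) (z : Finset ι → ZMod 2) : Prop :=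
  ∀ σ, z σ ≠ 0 → σ ⊆ G ∧ IsM bb cc σ ∧ σ.card = k

/-- The reduced homology of the matching complex of `G` vanishes below dimension `k - 1`. -/
def Vanish (bb : ι → β) (cc : ι → γ) (G : Finset ι) (k : ℕ) : Prop :=
  ∀ c < k, ∀ z, Supp bb cc G c z → bd z = 0 → ∃ w, Supp bb cc G (c + 1) w ∧ bd w = z

/-- The cone over the chain `y` with apex `v`. -/
def cone (v : ι) (y : Finset ι → ZMod 2) (σ : Finset ι) : ZMod 2 :=
  if v ∈ σ then y (σ.erase v) else 0

theorem bd_cone_of_notMem (v : ι) (y : Finset ι → ZMod 2) {τ : Finset ι} (h : v ∉ τ) :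
    bd (cone v y) τ = y τ := by
  unfold bd cone
  rw [Finset.sum_eq_single v]
  · simp [h]
  · intro w _ hw
    simp [Finset.mem_insert, h, Ne.symm hw]
  · simp

theorem bd_cone_of_mem (v : ι) (y : Finset ι → ZMod 2) {τ : Finset ι} (h : v ∈ τ) :
    bd (cone v y) τ = bd y (τ.erase v) + y τ := by
  unfold bd cone
  rw [← Finset.add_sum_erase _ _ (Finset.mem_univ v),
    ← Finset.add_sum_erase (a := v) _
      (fun w => if w ∈ τ.erase v then 0 else y (insert w (τ.erase v))) (Finset.mem_univ v)]
  simp only [h, if_true, Finset.mem_erase, ne_eq, not_true_eq_false, false_and, if_false,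
    Finset.insert_erase h, zero_add]
  rw [add_comm (y τ), add_assoc, CharTwo.add_self_eq_zero, add_zero]
  refine Finset.sum_congr rfl fun w hw => ?_
  have hwv : w ≠ v := (Finset.mem_erase.1 hw).1
  simp only [hwv, not_false_eq_true, true_and, Finset.mem_insert, h, or_true, if_true]
  rw [Finset.erase_insert_of_ne hwv]

theorem Good.vanish {bb : ι → β} {cc : ι → γ} {G : Finset ι} {k : ℕ} (h : Good bb cc G k) :
    Vanish bb cc G k := by
  induction h with
  | zero G => intro c hc; omega
  | iso G e k he hiso =>
    intro c _ z hz hbz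
    refine ⟨cone e fun σ => if e ∈ σ then 0 else z σ, ?_, ?_⟩
    · intro σ hσ
      simp only [cone, Finset.mem_erase, ne_eq, not_true_eq_false, false_and, if_false,
        ite_eq_right_iff, Classical.not_imp] at hσ
      obtain ⟨heσ, hσ⟩ := hσ
      obtain ⟨h1, h2, h3⟩ := hz _ hσ
      refine ⟨fun x hx => ?_, ?_, ?_⟩
      · by_cases hxe : x = e
        · rwa [hxe]
        · exact h1 (Finset.mem_erase.2 ⟨hxe, hx⟩)
      · rw [← Finset.insert_erase heσ]
        exact h2.insert fun g hg => hiso g (h1 hg) (Finset.mem_erase.1 hg).1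
      · rw [← Finset.card_erase_add_one heσ, h3]
    · funext τ
      by_cases hτ : e ∈ τ
      · rw [bd_cone_of_mem _ _ hτ]
        simp only [hτ, if_true, add_zero]
        have h0 : bd z (τ.erase e) = 0 := by rw [hbz]; rfl
        unfold bd at h0 ⊢
        rw [← Finset.add_sum_erase _ _ (Finset.mem_univ e)] at h0 ⊢
        simp only [Finset.mem_erase, ne_eq, not_true_eq_false, false_and, if_false,
          Finset.insert_erase hτ, hτ, if_true, zero_add] at h0 ⊢
        rw [← CharTwo.add_eq_zero, add_comm]
        refine Eq.trans ?_ h0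
        congr 1
        refine Finset.sum_congr rfl fun w hw => ?_
        have hwe : w ≠ e := (Finset.mem_erase.1 hw).1
        simp [hwe.symm]
      · rw [bd_cone_of_notMem _ _ hτ]
        simp [hτ]
  | step G v k hv _ _ ih1 ih2 =>
    intro c hc z hz hbz
    set u : Finset ι → ZMod 2 := fun σ => if v ∈ σ then 0 else z (insert v σ) with hu
    have key : ∀ y, Supp bb cc (away bb cc G v) c y → bd y = u →
        ∃ w, Supp bb cc G (c + 1) w ∧ bd w = z := by
      intro y hy hby
      have hvaway : v ∉ away bb cc G v := by simp [away]
      have hyv : ∀ τ, v ∈ τ → y τ = 0 := by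
        intro τ hτ
        by_contra hne
        exact hvaway ((hy _ hne).1 hτ)
      have hcone : Supp bb cc G (c + 1) (cone v y) := by
        intro σ hσ
        simp only [cone, ne_eq, ite_eq_right_iff, Classical.not_imp] at hσ
        obtain ⟨heσ, hσ⟩ := hσ
        obtain ⟨h1, h2, h3⟩ := hy _ hσ
        refine ⟨fun x hx => ?_, ?_, ?_⟩
        · by_cases hxe : x = v
          · rwa [hxe]
          · exact (Finset.mem_filter.1 (h1 (Finset.mem_erase.2 ⟨hxe, hx⟩))).1
        · rw [← Finset.insert_erase heσ]
          exact h2.insert fun g hg => (Finset.mem_filter.1 (h1 hg)).2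
        · rw [← Finset.card_erase_add_one heσ, h3]
      have hsupp : Supp bb cc (G.erase v) c (z + bd (cone v y)) := by
        intro σ hσ
        by_cases hvσ : v ∈ σ
        · exfalso
          apply hσ
          rw [Pi.add_apply, bd_cone_of_mem _ _ hvσ, hby, hyv _ hvσ, add_zero]
          simp only [hu, Finset.mem_erase, ne_eq, not_true_eq_false, false_and, if_false,
            Finset.insert_erase hvσ]
          exact CharTwo.add_self_eq_zero _
        · rw [Pi.add_apply, bd_cone_of_notMem _ _ hvσ] at hσ
          have : z σ ≠ 0 ∨ y σ ≠ 0 := by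
            by_contra hcon
            push Not at hcon
            rw [hcon.1, hcon.2, add_zero] at hσ
            exact hσ rfl
          have h3 : σ ⊆ G ∧ IsM bb cc σ ∧ σ.card = c := by
            rcases this with h | h
            · exact hz _ h
            · obtain ⟨h1, h2, h3⟩ := hy _ h
              exact ⟨h1.trans (Finset.filter_subset _ _), h2, h3⟩
          exact ⟨fun x hx => Finset.mem_erase.2 ⟨fun h => hvσ (h ▸ hx), h3.1 hx⟩, h3.2⟩
      obtain ⟨w, hw, hbw⟩ := ih1 c hc _ hsupp (by rw [bd_add, hbz, bd_bd, add_zero])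
      refine ⟨w + cone v y, ?_, ?_⟩
      · intro σ hσ
        have : w σ ≠ 0 ∨ cone v y σ ≠ 0 := by
          by_contra hcon
          push Not at hcon
          rw [Pi.add_apply, hcon.1, hcon.2, add_zero] at hσ
          exact hσ rfl
        rcases this with h | h
        · obtain ⟨h1, h2⟩ := hw _ h
          exact ⟨h1.trans (Finset.erase_subset _ _), h2⟩
        · exact hcone _ h
      · rw [bd_add, hbw]
        funext τ
        simp only [Pi.add_apply]
        rw [add_assoc, CharTwo.add_self_eq_zero, add_zero]
    have hubd : bd u = 0 := by
      funext τ
      simp only [Pi.zero_apply]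
      by_cases hvτ : v ∈ τ
      · unfold bd
        refine Finset.sum_eq_zero fun w _ => ?_
        simp [hu, hvτ]
      · have h0 : bd z (insert v τ) = 0 := by rw [hbz]; rfl
        rw [← h0]
        unfold bd
        refine Finset.sum_congr rfl fun w _ => ?_
        by_cases hwτ : w ∈ τ
        · simp [hwτ]
        · by_cases hwv : w = v
          · simp [hwv, hu]
          · simp [hwτ, hwv, hu, hvτ, Ne.symm hwv, Finset.insert_comm]
    have hlink : ∀ σ, u σ ≠ 0 → σ ⊆ away bb cc G v ∧ IsM bb cc σ ∧ σ.card + 1 = c := by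
      intro σ hσ
      simp only [hu, ne_eq, ite_eq_left_iff, Classical.not_imp] at hσ
      obtain ⟨hvσ, hσ⟩ := hσ
      obtain ⟨h1, h2, h3⟩ := hz _ hσ
      refine ⟨fun x hx => ?_, h2.mono (Finset.subset_insert _ _), ?_⟩
      · refine Finset.mem_filter.2 ⟨h1 (Finset.mem_insert_of_mem hx), ?_, ?_⟩
        · intro h
          exact hvσ (h2.1 (by simp [hx]) (by simp) h ▸ hx)
        · intro h
          exact hvσ (h2.2 (by simp [hx]) (by simp) h ▸ hx)
      · rw [← h3, Finset.card_insert_of_notMem hvσ]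
    cases c with
    | zero =>
      refine key 0 (fun σ h => absurd rfl h) ?_
      funext σ
      have : u σ = 0 := by
        by_contra h
        exact absurd (hlink σ h).2.2 (by omega)
      rw [this]
      simp [bd]
    | succ c =>
      obtain ⟨y, hy, hby⟩ := ih2 c (by omega) u
        (fun σ hσ => ⟨(hlink σ hσ).1, (hlink σ hσ).2.1, by have := (hlink σ hσ).2.2; omega⟩) hubd
      exact key y hy hby

end Homology

section Hall

variable {ι β γ A : Type*} [DecidableEq ι] [DecidableEq β] [DecidableEq γ] [DecidableEq A]

section Sperner

variable [Fintype ι]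

theorem exists_rainbow_chains {bb : ι → β} {cc : ι → γ} (E : Finset ι) (lab : ι → A)
    (hV : ∀ S : Finset A, Vanish bb cc (E.filter fun e => lab e ∈ S) S.card) (k : ℕ) :
    ∃ φ : Finset A → Finset ι → ZMod 2, φ ∅ = (fun σ => if σ = ∅ then 1 else 0) ∧
      ∀ S : Finset A, S.card ≤ k →
        Supp bb cc (E.filter fun e => lab e ∈ S) S.card (φ S) ∧
        bd (φ S) = ∑ a ∈ S, φ (S.erase a) := by
  induction k with
  | zero =>
    refine ⟨fun _ σ => if σ = ∅ then 1 else 0, rfl, fun S hS => ?_⟩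
    obtain rfl : S = ∅ := Finset.card_eq_zero.1 (by omega)
    refine ⟨fun σ hσ => ?_, ?_⟩
    · simp only [ne_eq, ite_eq_right_iff, one_ne_zero, imp_false, not_not] at hσ
      subst hσ
      simp [IsM]
    · funext τ
      simp [bd]
  | succ k ih =>
    obtain ⟨φ, h0, hφ⟩ := ih
    have hex : ∀ S : Finset A, S.card = k + 1 → ∃ w,
        Supp bb cc (E.filter fun e => lab e ∈ S) (k + 1) w ∧
        bd w = ∑ a ∈ S, φ (S.erase a) := by
      intro S hS
      refine hV S k (by omega) _ ?_ ?_
      · intro σ hσ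
        rw [Finset.sum_apply] at hσ
        obtain ⟨a, ha, hne⟩ := Finset.exists_ne_zero_of_sum_ne_zero hσ
        have hc : (S.erase a).card = k := by rw [Finset.card_erase_of_mem ha, hS]; rfl
        obtain ⟨h1, h2, h3⟩ := (hφ (S.erase a) hc.le).1 σ hne
        refine ⟨h1.trans ?_, h2, h3.trans hc⟩
        intro x hx
        simp only [Finset.mem_filter, Finset.mem_erase] at hx ⊢
        exact ⟨hx.1, hx.2.2⟩
      · rw [bd_sum]
        have : ∀ a ∈ S, bd (φ (S.erase a)) =
            ∑ b ∈ S, if a = b then 0 else φ ((S.erase a).erase b) := by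
          intro a ha
          have hc : (S.erase a).card = k := by rw [Finset.card_erase_of_mem ha, hS]; rfl
          rw [(hφ (S.erase a) hc.le).2, ← Finset.add_sum_erase _ _ ha]
          simp only [if_true, zero_add]
          refine Finset.sum_congr rfl fun b hb => ?_
          rw [if_neg (Ne.symm (Finset.mem_erase.1 hb).1)]
        rw [Finset.sum_congr rfl this]
        funext τ
        simp only [Finset.sum_apply, Pi.zero_apply]
        refine sum_symm_eq_zero S (fun a b => (if a = b then 0 else
          φ ((S.erase a).erase b) : Finset ι → ZMod 2) τ) (by simp) ?_
        intro a b
        simp only [eq_comm (a := a), Finset.erase_right_comm]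
    choose w hw using hex
    classical
    refine ⟨fun S => if h : S.card = k + 1 then w S h else φ S, ?_, ?_⟩
    · simp [h0]
    · intro S hS
      by_cases h : S.card = k + 1
      · simp only [h, dif_pos]
        refine ⟨(hw S h).1, ?_⟩
        rw [(hw S h).2]
        refine Finset.sum_congr rfl fun a ha => ?_
        rw [dif_neg]
        rw [Finset.card_erase_of_mem ha, h]; omega
      · simp only [h, dif_neg, not_false_eq_true]
        refine ⟨(hφ S (by omega)).1, ?_⟩
        rw [(hφ S (by omega)).2]
        refine Finset.sum_congr rfl fun a ha => ?_
        rw [dif_neg]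
        rw [Finset.card_erase_of_mem ha]; omega

theorem sum_erase_rainbow (lab : ι → A) (S : Finset A) (a : A) (ha : a ∈ S) (σ : Finset ι)
    (hσ : ∀ v ∈ σ, lab v ∈ S) (hc : σ.card = S.card) :
    (∑ v ∈ σ, if (σ.erase v).image lab = S.erase a then (1 : ZMod 2) else 0) =
      if σ.image lab = S then 1 else 0 := by
  have hinj : ∀ v ∈ σ, (σ.erase v).image lab = S.erase a →
      Set.InjOn lab (σ.erase v : Finset ι) := by
    intro v hv h
    rw [← Finset.card_image_iff, h, Finset.card_erase_of_mem ha, Finset.card_erase_of_mem hv, hc]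
  by_cases him : σ.image lab = S
  · rw [if_pos him]
    have hi : Set.InjOn lab (σ : Set ι) := by
      rw [← Finset.card_image_iff, him, hc]
    obtain ⟨v, hv, rfl⟩ := Finset.mem_image.1 (him.symm ▸ ha)
    rw [Finset.sum_eq_single v]
    · rw [if_pos]
      ext x
      simp only [Finset.mem_image, Finset.mem_erase, ← him]
      constructor
      · rintro ⟨y, ⟨h1, h2⟩, rfl⟩
        exact ⟨fun h => h1 (hi h2 hv h), y, h2, rfl⟩
      · rintro ⟨h1, y, h2, rfl⟩
        exact ⟨y, ⟨fun h => h1 (by rw [h]), h2⟩, rfl⟩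
    · intro w hw hwv
      rw [if_neg]
      intro h
      have : lab v ∈ (σ.erase w).image lab :=
        Finset.mem_image_of_mem _ (Finset.mem_erase.2 ⟨hwv.symm, hv⟩)
      rw [h] at this
      simp at this
    · intro h; exact absurd hv h
  · rw [if_neg him]
    by_cases hex : ∃ v ∈ σ, (σ.erase v).image lab = S.erase a
    · obtain ⟨v, hv, hve⟩ := hex
      have hla : lab v ≠ a := by
        intro h
        apply him
        rw [← Finset.insert_erase hv, Finset.image_insert, hve, h, Finset.insert_erase ha]
      have : lab v ∈ (σ.erase v).image lab := by
        rw [hve]; exact Finset.mem_erase.2 ⟨hla, hσ v hv⟩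
      obtain ⟨v', hv', hlab⟩ := Finset.mem_image.1 this
      obtain ⟨hne, hv'σ⟩ := Finset.mem_erase.1 hv'
      have hv'e : (σ.erase v').image lab = S.erase a := by
        rw [← hve]
        ext x
        simp only [Finset.mem_image, Finset.mem_erase]
        constructor
        · rintro ⟨y, ⟨h1, h2⟩, rfl⟩
          by_cases hy : y = v
          · exact ⟨v', ⟨hne, hv'σ⟩, by rw [hlab, hy]⟩
          · exact ⟨y, ⟨hy, h2⟩, rfl⟩
        · rintro ⟨y, ⟨h1, h2⟩, rfl⟩
          by_cases hy : y = v'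
          · exact ⟨v, ⟨hne.symm, hv⟩, by rw [hy, hlab]⟩
          · exact ⟨y, ⟨hy, h2⟩, rfl⟩
      rw [← Finset.add_sum_erase _ _ hv, ← Finset.add_sum_erase _ _ hv', if_pos hve, if_pos hv'e,
        Finset.sum_eq_zero]
      · decide
      · intro u hu
        simp only [Finset.mem_erase] at hu
        rw [if_neg]
        intro h
        exact hne ((hinj u hu.2.2 h) (by simp [hu.1.symm, hv'σ]) (by simp [hu.2.1.symm, hv]) hlab)
    · push Not at hex
      exact Finset.sum_eq_zero fun v hv => if_neg (hex v hv)

theorem exists_rainbow_matching [Fintype A] {bb : ι → β} {cc : ι → γ} (E : Finset ι)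
    (lab : ι → A)
    (hV : ∀ S : Finset A, Vanish bb cc (E.filter fun e => lab e ∈ S) S.card) :
    ∃ σ ⊆ E, IsM bb cc σ ∧ Set.InjOn lab σ ∧ σ.card = Fintype.card A := by
  obtain ⟨φ, h0, hφ⟩ := exists_rainbow_chains E lab hV (Fintype.card A)
  have hφ' := fun S => hφ S (Finset.card_le_univ S)
  have key : ∀ S : Finset A, (∑ σ, if σ.image lab = S then φ S σ else 0) = 1 := by
    intro S
    induction S using Finset.strongInduction with
    | H S ih =>
      rcases S.eq_empty_or_nonempty with rfl | ⟨a, ha⟩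
      · rw [h0]
        simp
      · rw [← ih _ (Finset.erase_ssubset ha)]
        have e1 : (∑ τ : Finset ι, if τ.image lab = S.erase a then φ (S.erase a) τ else 0) =
            ∑ τ : Finset ι, if τ.image lab = S.erase a then bd (φ S) τ else 0 := by
          refine Finset.sum_congr rfl fun τ _ => ?_
          split_ifs with hτ
          · rw [(hφ' S).2, Finset.sum_apply, Finset.sum_eq_single a]
            · intro b hb hba
              by_contra hne
              have := ((hφ' (S.erase b)).1 τ hne).1
              have hb' : b ∈ τ.image lab := by rw [hτ]; exact Finset.mem_erase.2 ⟨hba, hb⟩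
              obtain ⟨x, hx, rfl⟩ := Finset.mem_image.1 hb'
              have := this hx
              simp at this
            · intro h; exact absurd ha h
          · rfl
        rw [e1]
        have e2 : (∑ τ : Finset ι, if τ.image lab = S.erase a then bd (φ S) τ else 0) =
            ∑ x ∈ (Finset.univ : Finset (Finset ι × ι)).filter (fun x => x.2 ∉ x.1),
              if x.1.image lab = S.erase a then φ S (insert x.2 x.1) else 0 := by
          rw [Finset.sum_filter, ← Finset.univ_product_univ, Finset.sum_product]
          refine Finset.sum_congr rfl fun τ _ => ?_
          split_ifs with h
          · unfold bd
            refine Finset.sum_congr rfl fun v _ => ?_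
            by_cases hv : v ∈ τ <;> simp [hv]
          · simp
        have e3 : (∑ σ : Finset ι, if σ.image lab = S then φ S σ else 0) =
            ∑ x ∈ (Finset.univ : Finset (Finset ι × ι)).filter (fun x => x.2 ∈ x.1),
              if (x.1.erase x.2).image lab = S.erase a then φ S x.1 else 0 := by
          rw [Finset.sum_filter, ← Finset.univ_product_univ, Finset.sum_product]
          refine Finset.sum_congr rfl fun σ _ => ?_
          by_cases hz : φ S σ = 0
          · simp [hz]
          · obtain ⟨h1, h2, h3⟩ := (hφ' S).1 σ hz
            have := sum_erase_rainbow lab S a ha σ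
              (fun v hv => (Finset.mem_filter.1 (h1 hv)).2) h3
            have h4 : (if σ.image lab = S then φ S σ else 0) =
              (if σ.image lab = S then 1 else 0) * φ S σ := by split_ifs <;> simp
            rw [h4, ← this, Finset.sum_mul, ← Finset.sum_filter, Finset.filter_mem_eq_inter,
              Finset.univ_inter]
            refine Finset.sum_congr rfl fun v _ => ?_
            split_ifs <;> simp
        rw [e2, e3]
        refine Finset.sum_bij' (fun x _ => (x.1.erase x.2, x.2)) (fun x _ => (insert x.2 x.1, x.2))
          ?_ ?_ ?_ ?_ ?_
        · simp
        · simp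
        · rintro ⟨σ, v⟩ h
          simp only [Finset.mem_filter, Finset.mem_univ, true_and] at h
          simp [Finset.insert_erase h]
        · rintro ⟨σ, v⟩ h
          simp only [Finset.mem_filter, Finset.mem_univ, true_and] at h
          simp [Finset.erase_insert h]
        · rintro ⟨σ, v⟩ h
          simp only [Finset.mem_filter, Finset.mem_univ, true_and] at h
          simp [Finset.insert_erase h]
  have h1 := key Finset.univ
  have : (∑ σ, if σ.image lab = Finset.univ then φ Finset.univ σ else 0) ≠ 0 := by
    rw [h1]; decide
  obtain ⟨σ, _, hσ⟩ := Finset.exists_ne_zero_of_sum_ne_zero this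
  simp only [ne_eq, ite_eq_right_iff, Classical.not_imp] at hσ
  obtain ⟨him, hσ⟩ := hσ
  obtain ⟨h2, h3, h4⟩ := (hφ' Finset.univ).1 σ hσ
  refine ⟨σ, h2.trans (Finset.filter_subset _ _), h3, ?_, h4⟩
  rw [← Finset.card_image_iff, him, h4]

end Sperner

/-- Left ends of the bipartite multigraph extended by `d` dummy edges for every label. -/
def dummyEnd {δ : Type*} (d : ℕ) (bb : ι → δ) : ι ⊕ (A × Fin d) → δ ⊕ Fin d :=
  Sum.map bb Prod.snd

theorem Good.add_dummies {bb : ι → β} {cc : ι → γ} {G : Finset ι} {k d : ℕ}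
    (h : Good bb cc G k) (S : Finset A) (hS : S.Nonempty) (D : Finset (Fin d)) :
    Good (dummyEnd (A := A) d bb) (dummyEnd (A := A) d cc) (G.disjSum (S ×ˢ D)) (k + D.card) := by
  induction D using Finset.induction_on with
  | empty =>
    have := h.map (bb' := dummyEnd (A := A) d bb) (cc' := dummyEnd (A := A) d cc)
      Function.Embedding.inl (by simp [dummyEnd]) (by simp [dummyEnd])
    simpa using this
  | insert i D hi ih =>
    have key : ∀ T ⊆ S, T.Nonempty → Good (dummyEnd (A := A) d bb) (dummyEnd (A := A) d cc)
        (G.disjSum (S ×ˢ D ∪ T ×ˢ {i})) (k + D.card + 1) := by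
      intro T
      induction T using Finset.induction_on with
      | empty => intro _ h; simp at h
      | insert a T ha ihT =>
        intro hTS _
        rcases T.eq_empty_or_nonempty with rfl | hT
        · refine Good.iso _ (Sum.inr (a, i)) _ (by simp) ?_
          rintro (g | ⟨b, j⟩) hg hne
          · simp [dummyEnd]
          · simp only [Finset.inr_mem_disjSum, Finset.mem_union, Finset.mem_product,
              Finset.mem_insert, Finset.mem_singleton, Finset.notMem_empty, or_false] at hg
            rcases hg with ⟨_, hj⟩ | ⟨rfl, rfl⟩
            · have : j ≠ i := fun h => hi (h ▸ hj)
              simp [dummyEnd, this]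
            · simp at hne
        · refine Good.step _ (Sum.inr (a, i)) _ (by simp) ?_ ?_
          · convert ihT ((Finset.subset_insert _ _).trans hTS) hT using 1
            ext (g | ⟨b, j⟩)
            · simp
            · simp only [Finset.mem_erase, Finset.inr_mem_disjSum, Finset.mem_union,
                Finset.mem_product, Finset.mem_insert, Finset.mem_singleton, ne_eq, Sum.inr.injEq,
                Prod.mk.injEq]
              constructor
              · rintro ⟨h1, h2 | ⟨h2 | h2, h3⟩⟩
                · exact Or.inl h2
                · exact absurd ⟨h2, h3⟩ h1
                · exact Or.inr ⟨h2, h3⟩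
              · rintro (⟨h2, h3⟩ | ⟨h2, h3⟩)
                · exact ⟨fun h => hi (h.2 ▸ h3), Or.inl ⟨h2, h3⟩⟩
                · exact ⟨fun h => ha (h.1 ▸ h2), Or.inr ⟨Or.inr h2, h3⟩⟩
          · convert ih using 1
            ext (g | ⟨b, j⟩)
            · simp [away, dummyEnd]
            · rw [away, Finset.mem_filter]
              simp only [dummyEnd, Finset.inr_mem_disjSum,
                Finset.mem_union, Finset.mem_product, Finset.mem_singleton, Sum.map_inr, ne_eq,
                Sum.inr.injEq, and_self]
              constructor
              · rintro ⟨h1 | h1, h2⟩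
                · exact h1
                · exact absurd h1.2 h2
              · intro h
                exact ⟨Or.inl h, fun hj => hi (hj ▸ h.2)⟩
    have := key S subset_rfl hS
    rw [Finset.card_insert_of_notMem hi, ← add_assoc]
    convert this using 1
    congr 1
    ext ⟨b, j⟩
    simp only [Finset.mem_product, Finset.mem_insert, Finset.mem_union, Finset.mem_singleton]
    tauto

/-- Deficiency version of the topological Hall theorem. -/
theorem exists_deficient_set [Finite ι] [Fintype A] (bb : ι → β) (cc : ι → γ) (E : Finset ι)
    (lab : ι → A) (ν : ℕ)
    (hν : ∀ σ ⊆ E, IsM bb cc σ → Set.InjOn lab σ → σ.card ≤ ν) :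
    ∃ S : Finset A, ∀ k, Good bb cc (E.filter fun e => lab e ∈ S) k →
      k + Fintype.card A ≤ S.card + ν := by
  have := Fintype.ofFinite ι
  by_cases hn : Fintype.card A ≤ ν
  · refine ⟨∅, fun k hk => ?_⟩
    have := hk.eq_zero_of_empty (by simp)
    simp [this, hn]
  by_contra hcon
  push Not at hcon
  set d := Fintype.card A - ν - 1 with hd
  set lab' : ι ⊕ (A × Fin d) → A := Sum.elim lab Prod.fst with hlab'
  obtain ⟨σ, hσE, hσM, hσl, hσc⟩ := exists_rainbow_matching
    (bb := dummyEnd (A := A) d bb) (cc := dummyEnd (A := A) d cc)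
    (E.disjSum Finset.univ) lab' (by
      intro S
      rcases S.eq_empty_or_nonempty with rfl | hS
      · exact (Good.zero _).vanish
      obtain ⟨k, hk, hk2⟩ := hcon S
      have h1 := hk.add_dummies (d := d) S hS Finset.univ
      rw [Finset.card_univ, Fintype.card_fin] at h1
      have h2 := (h1.mono S.card (by omega)).vanish
      convert h2 using 1
      ext (g | ⟨b, j⟩) <;> simp [hlab'])
  have h1 : σ.toLeft.card ≤ ν := by
    refine hν _ ?_ ?_ ?_
    · intro x hx
      have := hσE (Finset.mem_toLeft.1 hx)
      simpa using this
    · constructor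
      · intro x hx y hy hxy
        have := hσM.1 (Finset.mem_toLeft.1 hx) (Finset.mem_toLeft.1 hy)
          (by simp [dummyEnd, hxy])
        exact Sum.inl_injective this
      · intro x hx y hy hxy
        have := hσM.2 (Finset.mem_toLeft.1 hx) (Finset.mem_toLeft.1 hy)
          (by simp [dummyEnd, hxy])
        exact Sum.inl_injective this
    · intro x hx y hy hxy
      have := hσl (Finset.mem_toLeft.1 hx) (Finset.mem_toLeft.1 hy) (by simp [hlab', hxy])
      exact Sum.inl_injective this
  have h2 : σ.toRight.card ≤ d := by
    refine le_trans ?_ (Finset.card_fin d).le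
    refine Finset.card_le_card_of_injOn Prod.snd (by simp) ?_
    intro x hx y hy hxy
    have := hσM.1 (Finset.mem_toRight.1 hx) (Finset.mem_toRight.1 hy)
      (by simp [dummyEnd, hxy])
    exact Sum.inr_injective this
  have h3 := Finset.card_toLeft_add_card_toRight (u := σ)
  omega

end Hall

section Bipartite

variable {ι β γ : Type*} [DecidableEq ι] [DecidableEq β] [DecidableEq γ]
variable {bb : ι → β} {cc : ι → γ}

open Classical in
/-- The matching number of the bipartite multigraph `G`. -/
noncomputable def nu (bb : ι → β) (cc : ι → γ) (G : Finset ι) : ℕ :=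
  (G.powerset.filter (IsM bb cc)).sup Finset.card

theorem IsM.le_nu {G M : Finset ι} (h : IsM bb cc M) (hM : M ⊆ G) : M.card ≤ nu bb cc G := by
  classical
  exact Finset.le_sup (f := Finset.card) (Finset.mem_filter.2 ⟨Finset.mem_powerset.2 hM, h⟩)

/-- `M` is a maximum matching of `G`. -/
def IsMax (bb : ι → β) (cc : ι → γ) (G M : Finset ι) : Prop :=
  M ⊆ G ∧ IsM bb cc M ∧ M.card = nu bb cc G

theorem exists_isMax (bb : ι → β) (cc : ι → γ) (G : Finset ι) : ∃ M, IsMax bb cc G M := by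
  classical
  obtain ⟨M, hM, h⟩ := Finset.exists_mem_eq_sup (G.powerset.filter (IsM bb cc))
    ⟨∅, by simp [IsM]⟩ Finset.card
  simp only [Finset.mem_filter, Finset.mem_powerset] at hM
  exact ⟨M, hM.1, hM.2, h.symm⟩

/-- Delete the vertices `RB` and `RC`. -/
def del (bb : ι → β) (cc : ι → γ) (G : Finset ι) (RB : Finset β) (RC : Finset γ) : Finset ι :=
  G.filter fun g => bb g ∉ RB ∧ cc g ∉ RC

theorem mem_del {G : Finset ι} {RB : Finset β} {RC : Finset γ} {g : ι} :
    g ∈ del bb cc G RB RC ↔ g ∈ G ∧ bb g ∉ RB ∧ cc g ∉ RC := by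
  simp [del]

theorem del_subset (G : Finset ι) (RB : Finset β) (RC : Finset γ) : del bb cc G RB RC ⊆ G :=
  Finset.filter_subset _ _

theorem del_del (G : Finset ι) (RB RB' : Finset β) (RC RC' : Finset γ) :
    del bb cc (del bb cc G RB RC) RB' RC' = del bb cc G (RB' ∪ RB) (RC' ∪ RC) := by
  ext g
  simp only [mem_del, Finset.mem_union]
  tauto

theorem del_ssubset {G : Finset ι} {RB : Finset β} {RC : Finset γ} {g : ι} (hg : g ∈ G)
    (h : bb g ∈ RB ∨ cc g ∈ RC) : del bb cc G RB RC ⊂ G := by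
  refine Finset.filter_ssubset.2 ⟨g, hg, ?_⟩
  tauto

theorem IsM.card_le_del {M : Finset ι} (h : IsM bb cc M) (RB : Finset β) (RC : Finset γ) :
    M.card ≤ (del bb cc M RB RC).card + RB.card + RC.card := by
  have h1 : (M.filter fun g => bb g ∈ RB).card ≤ RB.card :=
    Finset.card_le_card_of_injOn bb (by intro x hx; simp at hx; exact hx.2)
      (h.1.mono (by intro x hx; simp at hx; exact hx.1))
  have h2 : (M.filter fun g => cc g ∈ RC).card ≤ RC.card :=
    Finset.card_le_card_of_injOn cc (by intro x hx; simp at hx; exact hx.2)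
      (h.2.mono (by intro x hx; simp at hx; exact hx.1))
  have h3 : M ⊆ del bb cc M RB RC ∪ (M.filter fun g => bb g ∈ RB) ∪
      (M.filter fun g => cc g ∈ RC) := by
    intro x hx
    simp only [Finset.mem_union, mem_del, Finset.mem_filter, hx, true_and]
    tauto
  have := Finset.card_le_card h3
  have h4 := Finset.card_union_le (del bb cc M RB RC ∪ (M.filter fun g => bb g ∈ RB))
    (M.filter fun g => cc g ∈ RC)
  have h5 := Finset.card_union_le (del bb cc M RB RC) (M.filter fun g => bb g ∈ RB)
  omega

theorem del_mono {G G' : Finset ι} (h : G' ⊆ G) (RB : Finset β) (RC : Finset γ) :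
    del bb cc G' RB RC ⊆ del bb cc G RB RC :=
  Finset.filter_subset_filter _ h

theorem nu_le_del (G : Finset ι) (RB : Finset β) (RC : Finset γ) :
    nu bb cc G ≤ nu bb cc (del bb cc G RB RC) + RB.card + RC.card := by
  obtain ⟨M, h1, h2, h3⟩ := exists_isMax bb cc G
  have := h2.card_le_del RB RC
  have h4 := (h2.mono (del_subset (bb := bb) (cc := cc) M RB RC)).le_nu (del_mono h1 RB RC)
  omega

/-- All degrees in `G` are at most `r`. -/
def MaxDeg (bb : ι → β) (cc : ι → γ) (r : ℕ) (G : Finset ι) : Prop :=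
  (∀ b, (G.filter fun g => bb g = b).card ≤ r) ∧ ∀ c, (G.filter fun g => cc g = c).card ≤ r

theorem MaxDeg.mono {r : ℕ} {G G' : Finset ι} (h : MaxDeg bb cc r G) (hs : G' ⊆ G) :
    MaxDeg bb cc r G' :=
  ⟨fun b => (Finset.card_le_card (Finset.filter_subset_filter _ hs)).trans (h.1 b),
    fun c => (Finset.card_le_card (Finset.filter_subset_filter _ hs)).trans (h.2 c)⟩

theorem MaxDeg.card_left {r : ℕ} {G : Finset ι} (h : MaxDeg bb cc r G) (RB : Finset β) :
    (G.filter fun g => bb g ∈ RB).card ≤ RB.card * r := by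
  have := Finset.card_le_mul_card_image_of_maps_to
    (s := G.filter fun g => bb g ∈ RB) (t := RB) (f := bb) (by intro x hx; simp at hx; exact hx.2) r
    (by
      intro b _
      refine (Finset.card_le_card ?_).trans (h.1 b)
      intro x hx
      simp only [Finset.mem_filter] at hx ⊢
      exact ⟨hx.1.1, hx.2⟩)
  rwa [mul_comm] at this

theorem MaxDeg.card_right {r : ℕ} {G : Finset ι} (h : MaxDeg bb cc r G) (RC : Finset γ) :
    (G.filter fun g => cc g ∈ RC).card ≤ RC.card * r := by
  have := Finset.card_le_mul_card_image_of_maps_to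
    (s := G.filter fun g => cc g ∈ RC) (t := RC) (f := cc) (by intro x hx; simp at hx; exact hx.2) r
    (by
      intro b _
      refine (Finset.card_le_card ?_).trans (h.2 b)
      intro x hx
      simp only [Finset.mem_filter] at hx ⊢
      exact ⟨hx.1.1, hx.2⟩)
  rwa [mul_comm] at this

theorem MaxDeg.card_add_le {r : ℕ} {G : Finset ι} (h : MaxDeg bb cc r G) {G' W : Finset ι}
    (RB : Finset β) (RC : Finset γ) (hG' : ∀ g ∈ G, bb g ∉ RB → cc g ∉ RC → g ∈ G')
    (hW : ∀ g ∈ W, g ∈ G ∧ bb g ∈ RB ∧ cc g ∈ RC) :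
    G.card + W.card ≤ G'.card + RB.card * r + RC.card * r := by
  have h1 := h.card_left RB
  have h2 := h.card_right RC
  have h3 := Finset.card_union_add_card_inter (G.filter fun g => bb g ∈ RB)
    (G.filter fun g => cc g ∈ RC)
  have h4 : W ⊆ (G.filter fun g => bb g ∈ RB) ∩ (G.filter fun g => cc g ∈ RC) := by
    intro x hx
    simp [hW x hx]
  have h5 : G ⊆ G' ∪ ((G.filter fun g => bb g ∈ RB) ∪ (G.filter fun g => cc g ∈ RC)) := by
    intro x hx
    have := hG' x hx
    simp only [Finset.mem_union, Finset.mem_filter, hx, true_and]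
    tauto
  have h6 := (Finset.card_le_card h5).trans (Finset.card_union_le _ _)
  have h7 := Finset.card_le_card h4
  omega

theorem MaxDeg.card_le {r : ℕ} {G : Finset ι} (h : MaxDeg bb cc r G) {G' : Finset ι}
    (RB : Finset β) (RC : Finset γ) (hG' : ∀ g ∈ G, bb g ∉ RB → cc g ∉ RC → g ∈ G') :
    G.card ≤ G'.card + RB.card * r + RC.card * r := by
  have := h.card_add_le (W := ∅) RB RC hG' (by simp)
  simpa using this

/-- `G` has a certificate of quality at least `X / N`. -/
def Est (bb : ι → β) (cc : ι → γ) (N : ℤ) (G : Finset ι) (X : ℤ) : Prop :=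
  ∃ k : ℕ, X ≤ N * k ∧ Good bb cc G k

theorem Est.mono {N : ℤ} {G : Finset ι} {X Y : ℤ} (h : Est bb cc N G X) (hY : Y ≤ X) :
    Est bb cc N G Y := by
  obtain ⟨k, h1, h2⟩ := h
  exact ⟨k, hY.trans h1, h2⟩

theorem Est.step {N : ℤ} {G : Finset ι} {X : ℤ} {f : ι} (hf : f ∈ G)
    (h1 : Est bb cc N (G.erase f) X) (h2 : Est bb cc N (away bb cc G f) (X - N)) :
    Est bb cc N G X := by
  obtain ⟨k1, hk1, hg1⟩ := h1
  obtain ⟨k2, hk2, hg2⟩ := h2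
  rcases k1 with _ | k
  · exact ⟨0, hk1, Good.zero _⟩
  · rcases le_total k k2 with h | h
    · exact ⟨k + 1, hk1, Good.step G f k hf hg1 (hg2.mono _ h)⟩
    · refine ⟨k2 + 1, ?_, Good.step G f k2 hf (hg1.mono _ (by omega)) hg2⟩
      push_cast
      linarith

theorem Est.of_isolated {N : ℤ} (hN : 1 ≤ N) {G : Finset ι} {X : ℤ} {e : ι} (he : e ∈ G)
    (hiso : ∀ g ∈ G, g ≠ e → bb g ≠ bb e ∧ cc g ≠ cc e) : Est bb cc N G X := by
  refine ⟨X.toNat, ?_, Good.iso G e _ he hiso⟩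
  have h1 := Int.self_le_toNat X
  nlinarith [Int.natCast_nonneg X.toNat]

theorem Est.delete_set {N : ℤ} {G : Finset ι} {X : ℤ} (S : Finset ι) (hS : S ⊆ G)
    (hlink : ∀ S' ⊆ S, ∀ f ∈ S, f ∉ S' → Est bb cc N (away bb cc (G \ S') f) (X - N))
    (hrest : Est bb cc N (G \ S) X) : Est bb cc N G X := by
  induction S using Finset.induction_on with
  | empty => simpa using hrest
  | insert f S hf ih =>
    refine ih ((Finset.subset_insert _ _).trans hS) ?_ ?_
    · intro S' hS' g hg hgS'
      exact hlink S' (hS'.trans (Finset.subset_insert _ _)) g (Finset.mem_insert_of_mem hg) hgS'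
    · refine Est.step (f := f) ?_ ?_ (hlink S (Finset.subset_insert _ _) f
        (Finset.mem_insert_self _ _) hf)
      · exact Finset.mem_sdiff.2 ⟨hS (Finset.mem_insert_self _ _), hf⟩
      · convert hrest using 1
        ext x
        simp only [Finset.mem_erase, Finset.mem_sdiff, Finset.mem_insert]
        tauto

/-- Decompose along the star of an edge: first the other edges at its left end, then those at
its right end, then its parallel copies. -/
theorem Est.of_edge {N : ℤ} (hN : 1 ≤ N) {G : Finset ι} {X : ℤ} {e : ι} (he : e ∈ G)
    (h1 : ∀ f ∈ G, bb f = bb e → Est bb cc N (del bb cc G {bb e} {cc f}) (X - N))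
    (h2 : ∀ f ∈ G, cc f = cc e → bb f ≠ bb e →
      Est bb cc N (del bb cc G {bb e, bb f} {cc e}) (X - N)) :
    Est bb cc N G X := by
  refine Est.delete_set (G.filter fun g => bb g = bb e ∧ cc g ≠ cc e) (Finset.filter_subset _ _)
    ?_ ?_
  · intro S' hS' f hf _
    have hf' := Finset.mem_filter.1 hf
    convert h1 f hf'.1 hf'.2.1 using 1
    ext g
    have := @hS' g
    simp only [away, mem_del, Finset.mem_filter, Finset.mem_sdiff, Finset.mem_singleton] at *
    grind
  refine Est.delete_set (G.filter fun g => cc g = cc e ∧ bb g ≠ bb e) ?_ ?_ ?_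
  · intro g
    simp only [Finset.mem_filter, Finset.mem_sdiff]
    tauto
  · intro S' hS' f hf _
    have hf' := Finset.mem_filter.1 hf
    convert h2 f hf'.1 hf'.2.1 hf'.2.2 using 1
    ext g
    have := @hS' g
    simp only [away, mem_del, Finset.mem_filter, Finset.mem_sdiff, Finset.mem_singleton,
      Finset.mem_insert] at *
    grind
  refine Est.delete_set (G.filter fun g => cc g = cc e ∧ bb g = bb e ∧ g ≠ e) ?_ ?_ ?_
  · intro g
    simp only [Finset.mem_filter, Finset.mem_sdiff]
    tauto
  · intro S' hS' f hf _
    have hf' := Finset.mem_filter.1 hf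
    convert h1 f hf'.1 hf'.2.2.1 using 1
    ext g
    have := @hS' g
    simp only [away, mem_del, Finset.mem_filter, Finset.mem_sdiff, Finset.mem_singleton] at *
    grind
  · refine Est.of_isolated hN (e := e) ?_ ?_
    · simp [he]
    · intro g
      simp only [Finset.mem_filter, Finset.mem_sdiff]
      grind

/-- The right vertex `c` is missed by some maximum matching of `G`. -/
def Iness (bb : ι → β) (cc : ι → γ) (G : Finset ι) (c : γ) : Prop :=
  ∃ M, IsMax bb cc G M ∧ ∀ g ∈ M, cc g ≠ c

theorem IsMax.exists_left {G M : Finset ι} (hM : IsMax bb cc G M) {e : ι} (he : e ∈ G)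
    (hc : ∀ g ∈ M, cc g ≠ cc e) : ∃ e1 ∈ M, bb e1 = bb e := by
  by_contra hcon
  push Not at hcon
  have h1 : IsM bb cc (insert e M) := hM.2.1.insert fun g hg => ⟨hcon g hg, hc g hg⟩
  have h2 := h1.le_nu (G := G) (Finset.insert_subset he hM.1)
  rw [Finset.card_insert_of_notMem (fun h => hc e h rfl), hM.2.2] at h2
  omega

theorem exists_isMax_cover {G : Finset ι} {c : γ} (hc : c ∈ G.image cc) :
    ∃ M, IsMax bb cc G M ∧ ∃ e ∈ M, cc e = c := by
  obtain ⟨M, hM⟩ := exists_isMax bb cc G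
  by_cases h : ∃ e ∈ M, cc e = c
  · exact ⟨M, hM, h⟩
  push Not at h
  obtain ⟨e, he, rfl⟩ := Finset.mem_image.1 hc
  obtain ⟨e1, he1, hb⟩ := hM.exists_left he h
  refine ⟨insert e (M.erase e1), ⟨?_, ?_, ?_⟩, e, Finset.mem_insert_self _ _, rfl⟩
  · exact Finset.insert_subset he ((Finset.erase_subset _ _).trans hM.1)
  · refine (hM.2.1.mono (Finset.erase_subset _ _)).insert fun g hg => ?_
    obtain ⟨h1, h2⟩ := Finset.mem_erase.1 hg
    exact ⟨fun h3 => h1 (hM.2.1.1 h2 he1 (h3.trans hb.symm)), h g h2⟩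
  · rw [Finset.card_insert_of_notMem (fun h3 => h e (Finset.mem_of_mem_erase h3) rfl),
      Finset.card_erase_add_one he1, hM.2.2]

theorem nu_le_card_image (G : Finset ι) : nu bb cc G ≤ (G.image cc).card := by
  obtain ⟨M, h1, h2, h3⟩ := exists_isMax bb cc G
  rw [← h3, ← Finset.card_image_of_injOn h2.2]
  exact Finset.card_le_card (Finset.image_subset_image h1)

theorem nu_eq_card_image {G : Finset ι} (h : ∀ c ∈ G.image cc, ¬ Iness bb cc G c) :
    nu bb cc G = (G.image cc).card := by
  refine le_antisymm (nu_le_card_image G) ?_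
  obtain ⟨M, hM⟩ := exists_isMax bb cc G
  rw [← hM.2.2, ← Finset.card_image_of_injOn hM.2.1.2]
  refine Finset.card_le_card fun c hc => ?_
  by_contra hcon
  refine h c hc ⟨M, hM, fun g hg hgc => hcon ?_⟩
  exact Finset.mem_image.2 ⟨g, hg, hgc⟩

/-- The neighbourhood of a set of right vertices. -/
def NB (bb : ι → β) (cc : ι → γ) (G : Finset ι) (X : Finset γ) : Finset β :=
  (G.filter fun g => cc g ∈ X).image bb

theorem mem_NB {G : Finset ι} {X : Finset γ} {b : β} :
    b ∈ NB bb cc G X ↔ ∃ g ∈ G, cc g ∈ X ∧ bb g = b := by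
  simp [NB, and_assoc]

theorem NB_mono {G : Finset ι} {X Y : Finset γ} (h : X ⊆ Y) : NB bb cc G X ⊆ NB bb cc G Y := by
  intro b
  simp only [mem_NB]
  rintro ⟨g, h1, h2, h3⟩
  exact ⟨g, h1, h h2, h3⟩

theorem NB_union (G : Finset ι) (X Y : Finset γ) :
    NB bb cc G (X ∪ Y) = NB bb cc G X ∪ NB bb cc G Y := by
  ext b
  simp only [mem_NB, Finset.mem_union]
  grind

theorem card_le_card_NB {G : Finset ι} (h : ∀ c ∈ G.image cc, ¬ Iness bb cc G c) {X : Finset γ}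
    (hX : X ⊆ G.image cc) : X.card ≤ (NB bb cc G X).card := by
  obtain ⟨M, hM⟩ := exists_isMax bb cc G
  have h1 : X ⊆ (M.filter fun g => cc g ∈ X).image cc := by
    intro c hc
    by_contra hcon
    refine h c (hX hc) ⟨M, hM, fun g hg hgc => hcon ?_⟩
    exact Finset.mem_image.2 ⟨g, Finset.mem_filter.2 ⟨hg, hgc ▸ hc⟩, hgc⟩
  calc X.card ≤ _ := Finset.card_le_card h1
    _ ≤ (M.filter fun g => cc g ∈ X).card := Finset.card_image_le
    _ = ((M.filter fun g => cc g ∈ X).image bb).card := by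
        rw [Finset.card_image_of_injOn (hM.2.1.1.mono (by
          intro x hx; simp at hx; exact hx.1))]
    _ ≤ _ := Finset.card_le_card (Finset.image_subset_image (Finset.filter_subset_filter _ hM.1))

/-- Removing both ends of an edge of a maximum matching and one more left vertex lowers the
matching number by at most two. -/
theorem IsMax.nu_le_del_pair {G M : Finset ι} (hM : IsMax bb cc G M) {e : ι} (he : e ∈ M)
    (b' : β) : nu bb cc G ≤ nu bb cc (del bb cc G {bb e, b'} {cc e}) + 2 := by
  have h1 := (hM.2.1.mono (del_subset (bb := bb) (cc := cc) M {bb e, b'} {cc e})).le_nu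
    (del_mono hM.1 _ _)
  have h2 : (del bb cc M {bb e, b'} {cc e}) = del bb cc M {bb e, b'} ∅ := by
    ext g
    simp only [mem_del, Finset.mem_insert, Finset.mem_singleton, Finset.notMem_empty,
      not_false_eq_true, and_true]
    constructor
    · tauto
    · rintro ⟨hg, h⟩
      exact ⟨hg, h, fun h3 => h (Or.inl (by rw [hM.2.1.2 hg he h3]))⟩
  have h3 := hM.2.1.card_le_del {bb e, b'} ∅
  rw [← h2] at h3
  have h4 : ({bb e, b'} : Finset β).card ≤ 2 := Finset.card_le_two
  have := hM.2.2
  simp only [Finset.card_empty, add_zero] at h3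
  omega

set_option maxHeartbeats 1000000 in
/-- Decompose along an edge at an inessential right vertex. -/
theorem Est.of_iness {N : ℤ} (hN : 1 ≤ N) {r : ℕ} {G : Finset ι} (hdeg : MaxDeg bb cc r G) {X : ℤ}
    {e : ι} (he : e ∈ G) (hi : Iness bb cc G (cc e))
    (hgain : ∀ G' ⊂ G, nu bb cc G ≤ nu bb cc G' + 1 → G.card ≤ G'.card + 3 * r →
      Est bb cc N G' (X - N))
    (hneu : ∀ f ∈ G, bb f = bb e → ¬ Iness bb cc G (cc f) →
      Est bb cc N (del bb cc G {bb f} {cc f}) (X - N)) :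
    Est bb cc N G X := by
  obtain ⟨M, hM, hMc⟩ := hi
  obtain ⟨e1, he1, hb1⟩ := hM.exists_left he hMc
  have he1c : cc e1 ≠ cc e := hMc e1 he1
  have gain : ∀ (G' M' : Finset ι), G' ⊂ G → M' ⊆ G' → IsM bb cc M' →
      nu bb cc G ≤ M'.card + 1 → ∀ (RB : Finset β) (RC : Finset γ),
      RB.card + RC.card ≤ 3 → (∀ g ∈ G, bb g ∉ RB → cc g ∉ RC → g ∈ G') →
      Est bb cc N G' (X - N) := by
    intro G' M' h1 h2 h3 h4 RB RC h5 h6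
    refine hgain G' h1 (h4.trans (by have := h3.le_nu h2; omega)) ?_
    have h7 := hdeg.card_le RB RC h6
    nlinarith
  have card_erase : nu bb cc G ≤ (M.erase e1).card + 1 := by
    rw [Finset.card_erase_add_one he1, hM.2.2]
  refine Est.delete_set (G.filter fun g => bb g = bb e ∧ cc g ≠ cc e ∧ cc g ≠ cc e1)
    (Finset.filter_subset _ _) ?_ ?_
  · intro S' hS' f hf _
    have hf' := Finset.mem_filter.1 hf
    have heq : away bb cc (G \ S') f = del bb cc G {bb f} {cc f} := by
      ext g
      have := @hS' g
      simp only [away, mem_del, Finset.mem_filter, Finset.mem_sdiff, Finset.mem_singleton] at *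
      grind
    rw [heq]
    by_cases hfi : Iness bb cc G (cc f)
    · obtain ⟨M', hM', hMc'⟩ := hfi
      refine gain _ (del bb cc M' {bb f} ∅) (del_ssubset hf'.1 (by simp)) ?_
        (hM'.2.1.mono (del_subset _ _ _)) ?_ {bb f} {cc f} (by simp) ?_
      · intro g
        simp only [mem_del, Finset.mem_singleton, Finset.notMem_empty, not_false_eq_true, and_true]
        rintro ⟨h1, h2⟩
        exact ⟨hM'.1 h1, h2, hMc' g h1⟩
      · have := hM'.2.1.card_le_del {bb f} ∅
        rw [hM'.2.2] at this
        simpa using this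
      · intro g h1 h2 h3
        exact mem_del.2 ⟨h1, h2, h3⟩
    · exact hneu f hf'.1 hf'.2.1 hfi
  have hsub : ∀ G1 : Finset ι, G1 ⊆ G → ∀ f ∈ G, away bb cc G1 f ⊂ G := by
    intro G1 h1 f hf
    refine (Finset.ssubset_iff_of_subset ((Finset.filter_subset _ _).trans h1)).2 ⟨f, hf, ?_⟩
    simp
  refine Est.delete_set (G.filter fun g => cc g = cc e ∧ bb g ≠ bb e) ?_ ?_ ?_
  · intro g
    simp only [Finset.mem_filter, Finset.mem_sdiff]
    tauto
  · intro S' hS' f hf _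
    have hf' := Finset.mem_filter.1 hf
    refine gain _ (del bb cc M {bb f} ∅) (hsub _ ?_ f hf'.1) ?_
        (hM.2.1.mono (del_subset _ _ _)) ?_ {bb f, bb e} {cc e} ?_ ?_
    · exact Finset.sdiff_subset.trans Finset.sdiff_subset
    · intro g
      have h1 := @hS' g
      have h2 := @hM.1 g
      have h3 := hMc g
      have h4 : g ∈ M → bb g = bb e → g = e1 := fun h h' => hM.2.1.1 h he1 (h'.trans hb1.symm)
      simp only [away, mem_del, Finset.mem_filter, Finset.mem_sdiff, Finset.mem_singleton,
        Finset.notMem_empty] at *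
      grind
    · have := hM.2.1.card_le_del {bb f} ∅
      rw [hM.2.2] at this
      simpa using this
    · rw [Finset.card_singleton]
      have : ({bb f, bb e} : Finset β).card ≤ 2 := Finset.card_le_two
      omega
    · intro g
      have h1 := @hS' g
      simp only [away, Finset.mem_filter, Finset.mem_sdiff, Finset.mem_singleton,
        Finset.mem_insert] at *
      grind
  refine Est.delete_set (G.filter fun g => bb g = bb e ∧ cc g = cc e1) ?_ ?_ ?_
  · intro g
    simp only [Finset.mem_filter, Finset.mem_sdiff]
    grind
  · intro S' hS' f hf _
    have hf' := Finset.mem_filter.1 hf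
    refine gain _ (M.erase e1) (hsub _ ?_ f hf'.1) ?_
        (hM.2.1.mono (Finset.erase_subset _ _)) card_erase {bb e} {cc e, cc e1} ?_ ?_
    · exact Finset.sdiff_subset.trans (Finset.sdiff_subset.trans Finset.sdiff_subset)
    · intro g
      have h1 := @hS' g
      have h2 := @hM.1 g
      have h3 := hMc g
      have h4 : g ∈ M → bb g = bb e → g = e1 := fun h h' => hM.2.1.1 h he1 (h'.trans hb1.symm)
      have h5 : g ∈ M → cc g = cc e1 → g = e1 := fun h h' => hM.2.1.2 h he1 h'
      simp only [away, Finset.mem_filter, Finset.mem_sdiff, Finset.mem_erase] at *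
      grind
    · rw [Finset.card_singleton]
      have : ({cc e, cc e1} : Finset γ).card ≤ 2 := Finset.card_le_two
      omega
    · intro g
      have h1 := @hS' g
      simp only [away, Finset.mem_filter, Finset.mem_sdiff, Finset.mem_singleton,
        Finset.mem_insert] at *
      grind
  refine Est.delete_set (G.filter fun g => bb g = bb e ∧ cc g = cc e ∧ g ≠ e) ?_ ?_ ?_
  · intro g
    simp only [Finset.mem_filter, Finset.mem_sdiff]
    grind
  · intro S' hS' f hf _
    have hf' := Finset.mem_filter.1 hf
    refine gain _ (M.erase e1) (hsub _ ?_ f hf'.1) ?_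
        (hM.2.1.mono (Finset.erase_subset _ _)) card_erase {bb e} {cc e} (by simp) ?_
    · exact Finset.sdiff_subset.trans (Finset.sdiff_subset.trans
        (Finset.sdiff_subset.trans Finset.sdiff_subset))
    · intro g
      have h1 := @hS' g
      have h2 := @hM.1 g
      have h3 := hMc g
      have h4 : g ∈ M → bb g = bb e → g = e1 := fun h h' => hM.2.1.1 h he1 (h'.trans hb1.symm)
      simp only [away, Finset.mem_filter, Finset.mem_sdiff, Finset.mem_erase] at *
      grind
    · intro g
      have h1 := @hS' g
      simp only [away, Finset.mem_filter, Finset.mem_sdiff, Finset.mem_singleton] at *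
      grind
  · refine Est.of_isolated hN (e := e) ?_ ?_
    · simp [he, he1c.symm]
    · intro g
      simp only [Finset.mem_filter, Finset.mem_sdiff]
      grind

end Bipartite

section Bipartite

variable {ι β γ : Type*} [DecidableEq ι] [DecidableEq β] [DecidableEq γ]
variable {bb : ι → β} {cc : ι → γ}

/-- The induction hypothesis, as used for subgraphs `G'` of `G` reached after taking `s` links:
a link may cost two units of matching number and `2r - 1/4` edges on average, and a single
saving in matching number pays for many edges. -/
structure Oracle (bb : ι → β) (cc : ι → γ) (N : ℤ) (r : ℕ) (G : Finset ι) (X : ℤ) : Prop where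
  one_le : 1 ≤ N
  two_le : 2 ≤ r
  deg : MaxDeg bb cc r G
  neutral : ∀ G' (s : ℕ), G' ⊂ G → nu bb cc G ≤ nu bb cc G' + 2 * s →
    8 * G.card + 2 * s ≤ 8 * G'.card + 16 * r * s → Est bb cc N G' (X - N * s)
  gain : ∀ G' (s : ℕ), G' ⊂ G → nu bb cc G + 1 ≤ nu bb cc G' + 2 * s →
    8 * G.card + 2 * s + 8 * r ≤ 8 * G'.card + 16 * r * s + 12 * r ^ 2 + 1 →
    Est bb cc N G' (X - N * s)

variable {N : ℤ} {r : ℕ} {G : Finset ι} {X : ℤ}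

theorem card_del_edge (h : MaxDeg bb cc r G) {e f : ι} (he : e ∈ G) (hb : bb f = bb e) :
    G.card + 1 ≤ (del bb cc G {bb f} {cc e}).card + 2 * r := by
  have := h.card_add_le (G' := del bb cc G {bb f} {cc e}) (W := {e}) {bb f} {cc e}
    (fun g h1 h2 h3 => mem_del.2 ⟨h1, h2, h3⟩) (by simp [he, hb])
  simp only [Finset.card_singleton, one_mul] at this
  omega

theorem card_del_pair (h : MaxDeg bb cc r G) {e f : ι} (he : e ∈ G) (hf : f ∈ G)
    (hc : cc f = cc e) (hb : bb f ≠ bb e) :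
    G.card + 2 ≤ (del bb cc G {bb e, bb f} {cc e}).card + 3 * r := by
  have := h.card_add_le (G' := del bb cc G {bb e, bb f} {cc e}) (W := {e, f}) {bb e, bb f} {cc e}
    (fun g h1 h2 h3 => mem_del.2 ⟨h1, h2, h3⟩) (by simp [he, hf, hc])
  rw [Finset.card_singleton, Finset.card_pair hb.symm,
    Finset.card_pair (fun h => hb (by rw [h]))] at this
  omega

theorem Oracle.exhaust (o : Oracle bb cc N r G X) (hess : ∀ c ∈ G.image cc, ¬ Iness bb cc G c)
    {T : Finset γ} (hT : T ⊆ G.image cc) (hNT : (NB bb cc G T).card ≤ T.card)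
    {RB : Finset β} {RC : Finset γ} {s : ℕ} (hRB : RB ⊆ NB bb cc G T)
    (h7 : T.card ≤ 7 * (RC \ T).card)
    (hRC : ∀ d ∈ RC \ T, ∃ f ∈ G, cc f = d ∧ bb f ∈ NB bb cc G T)
    (hss : del bb cc G RB RC ⊂ G)
    (hnu : nu bb cc G = nu bb cc (del bb cc G RB RC) + 2 * s)
    (hTd : ∀ c ∈ T, c ∉ (del bb cc G RB RC).image cc) :
    Est bb cc N (del bb cc G RB RC) (X - N * s) := by
  have hr := o.two_le
  refine o.neutral _ s hss hnu.le ?_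
  obtain ⟨x, _, _⟩ := Finset.exists_of_ssubset hss
  have : Nonempty ι := ⟨x⟩
  choose! w hw using hRC
  have h1 := o.deg.card_add_le (G' := del bb cc G RB RC) (W := (RC \ T).image w)
    (NB bb cc G T) (RC \ T) (by
      intro g hg h2 h3
      refine mem_del.2 ⟨hg, fun h => h2 (hRB h), fun h => ?_⟩
      rw [Finset.mem_sdiff] at h3
      push Not at h3
      exact h2 (mem_NB.2 ⟨g, hg, h3 h, rfl⟩)) (by
      intro g hg
      obtain ⟨d, hd, rfl⟩ := Finset.mem_image.1 hg
      exact ⟨(hw d hd).1, (hw d hd).2.2, (hw d hd).2.1.symm ▸ hd⟩)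
  rw [Finset.card_image_of_injOn (by
    intro x hx y hy hxy
    rw [← (hw x hx).2.1, ← (hw y hy).2.1, hxy])] at h1
  have h2 : ((del bb cc G RB RC).image cc ∪ (T ∪ RC \ T)) ⊆ G.image cc := by
    refine Finset.union_subset (Finset.image_subset_image (del_subset _ _ _))
      (Finset.union_subset hT ?_)
    intro d hd
    exact Finset.mem_image.2 ⟨w d, (hw d hd).1, (hw d hd).2.1⟩
  have h3 := Finset.card_le_card h2
  rw [Finset.card_union_of_disjoint, Finset.card_union_of_disjoint Finset.disjoint_sdiff] at h3
  · have h4 := nu_eq_card_image hess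
    have h5 := nu_le_card_image (bb := bb) (cc := cc) (del bb cc G RB RC)
    have h6 : T.card + (RC \ T).card ≤ 2 * s := by omega
    have h8 : (NB bb cc G T).card * r ≤ T.card * r := Nat.mul_le_mul_right _ hNT
    zify at *
    nlinarith
  · rw [Finset.disjoint_left]
    intro d hd hd2
    rcases Finset.mem_union.1 hd2 with h | h
    · exact hTd d h hd
    · obtain ⟨g, hg, rfl⟩ := Finset.mem_image.1 hd
      exact (mem_del.1 hg).2.2 (Finset.mem_sdiff.1 h).1

theorem Oracle.eat (o : Oracle bb cc N r G X) (hess : ∀ c ∈ G.image cc, ¬ Iness bb cc G c)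
    {T : Finset γ} (hT : T ⊆ G.image cc) (hNT : (NB bb cc G T).card ≤ T.card) {j : ℕ}
    (hj : 6 * j + 14 < 8 * r) (n : ℕ) :
    ∀ (RB : Finset β) (RC : Finset γ) (s u : ℕ), (del bb cc G RB RC).card ≤ n →
    RB ⊆ NB bb cc G T → T.card ≤ 7 * (RC \ T).card →
    (∀ d ∈ RC \ T, ∃ f ∈ G, cc f = d ∧ bb f ∈ NB bb cc G T) →
    del bb cc G RB RC ⊂ G →
    nu bb cc G = nu bb cc (del bb cc G RB RC) + 2 * s →
    8 * G.card + 2 * s + 14 * (1 + u) ≤ 8 * (del bb cc G RB RC).card + 16 * r * s + 8 * r * (1 + u) →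
    u + (NB bb cc G T \ RB).card ≤ j →
    Est bb cc N (del bb cc G RB RC) (X - N * s) := by
  have hr := o.two_le
  induction n with
  | zero =>
    intro RB RC s u hn hRB h7 hRC hss hnu _ _
    refine o.exhaust hess hT hNT hRB h7 hRC hss hnu ?_
    intro c _
    rw [Finset.card_eq_zero.1 (Nat.le_zero.1 hn)]
    simp
  | succ n ih =>
    intro RB RC s u hn hRB h7 hRC hss hnu hcost hu
    by_cases hTd : ∀ c ∈ T, c ∉ (del bb cc G RB RC).image cc
    · exact o.exhaust hess hT hNT hRB h7 hRC hss hnu hTd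
    push Not at hTd
    obtain ⟨c, hcT, hc⟩ := hTd
    obtain ⟨M, hM, e, he, hec⟩ := exists_isMax_cover (bb := bb) hc
    set G' := del bb cc G RB RC with hG'
    have hdeg : MaxDeg bb cc r G' := o.deg.mono (del_subset _ _ _)
    have heG' : e ∈ G' := hM.1 he
    have next : ∀ (PB : Finset β) (PC : Finset γ) (v : ℕ), PB ⊆ NB bb cc G T →
        (∀ d ∈ PC, ∃ f ∈ G, cc f = d ∧ bb f ∈ NB bb cc G T) →
        nu bb cc G' ≤ nu bb cc (del bb cc G' PB PC) + 2 →
        8 * G'.card + 2 + 14 * v ≤ 8 * (del bb cc G' PB PC).card + 16 * r + 8 * r * v →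
        u + v + (NB bb cc G T \ (PB ∪ RB)).card ≤ j →
        del bb cc G' PB PC ⊂ G' →
        Est bb cc N (del bb cc G' PB PC) (X - N * s - N) := by
      intro PB PC v h1 h2 h3 h4 h5 h6
      have hX : X - N * s - N = X - N * ((s + 1 : ℕ) : ℤ) := by push_cast; ring
      rw [hX]
      by_cases hg : nu bb cc G' ≤ nu bb cc (del bb cc G' PB PC) + 1
      · refine o.gain _ _ (h6.trans hss) (by omega) ?_
        have hw : 6 * (u + v) + 14 < 8 * r := by omega
        zify at *
        nlinarith [mul_nonneg (show (0 : ℤ) ≤ 8 * r - 14 by linarith)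
          (show (0 : ℤ) ≤ 8 * r - 14 - 6 * (u + v) by linarith)]
      · have hlt := Finset.card_lt_card h6
        have hdd : del bb cc G' PB PC = del bb cc G (PB ∪ RB) (PC ∪ RC) := by rw [hG', del_del]
        rw [hdd] at h3 h4 h6 hg hlt ⊢
        refine ih _ _ (s + 1) (u + v) (by omega) (Finset.union_subset h1 hRB) ?_ ?_
          (h6.trans hss) (by omega) ?_ h5
        · refine h7.trans (Nat.mul_le_mul_left _ (Finset.card_le_card ?_))
          exact Finset.sdiff_subset_sdiff Finset.subset_union_right subset_rfl
        · intro d hd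
          rw [Finset.mem_sdiff, Finset.mem_union] at hd
          rcases hd.1 with h | h
          · exact h2 d h
          · exact hRC d (Finset.mem_sdiff.2 ⟨h, hd.2⟩)
        · zify at *
          nlinarith
    have heT : bb e ∈ NB bb cc G T := mem_NB.2 ⟨e, (del_subset _ _ _ heG'), hec ▸ hcT, rfl⟩
    have heB : bb e ∉ RB := (mem_del.1 heG').2.1
    refine Est.of_edge o.one_le heG' ?_ ?_
    · intro f hf hfe
      refine next {bb e} {cc f} 0 (by simpa using heT) ?_ ?_ ?_ ?_ (del_ssubset heG' (by simp))
      · intro d hd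
        rw [Finset.mem_singleton] at hd
        exact ⟨f, del_subset _ _ _ hf, hd.symm, hfe ▸ heT⟩
      · have := nu_le_del (bb := bb) (cc := cc) G' {bb e} {cc f}
        simpa using this
      · have := card_del_edge hdeg hf hfe.symm
        omega
      · have : (NB bb cc G T \ ({bb e} ∪ RB)).card ≤ (NB bb cc G T \ RB).card :=
          Finset.card_le_card (Finset.sdiff_subset_sdiff subset_rfl Finset.subset_union_right)
        omega
    · intro f hf hfc hfb
      have hfT : bb f ∈ NB bb cc G T :=
        mem_NB.2 ⟨f, (del_subset _ _ _ hf), hfc ▸ hec ▸ hcT, rfl⟩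
      have hfB : bb f ∉ RB := (mem_del.1 hf).2.1
      refine next {bb e, bb f} {cc e} 1 ?_ ?_ (hM.nu_le_del_pair he _) ?_ ?_
        (del_ssubset heG' (by simp))
      · exact Finset.insert_subset heT (by simpa using hfT)
      · intro d hd
        rw [Finset.mem_singleton] at hd
        exact ⟨e, del_subset _ _ _ heG', hd.symm, heT⟩
      · have := card_del_pair hdeg heG' hf hfc hfb
        omega
      · have : (NB bb cc G T \ ({bb e, bb f} ∪ RB)) ⊂ (NB bb cc G T \ RB) := by
          refine (Finset.ssubset_iff_of_subset
            (Finset.sdiff_subset_sdiff subset_rfl Finset.subset_union_right)).2 ⟨bb e, ?_, ?_⟩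
          · simp [heT, heB]
          · simp
        have := Finset.card_lt_card this
        omega

end Bipartite

section Bipartite

variable {ι β γ : Type*} [DecidableEq ι] [DecidableEq β] [DecidableEq γ]
variable {bb : ι → β} {cc : ι → γ}
variable {N : ℤ} {r : ℕ} {G : Finset ι} {X : ℤ}

/-- A nonempty set of right vertices whose neighbourhood exceeds it by at most one. -/
def NearTight (bb : ι → β) (cc : ι → γ) (G : Finset ι) (Y : Finset γ) : Prop :=
  Y ⊆ G.image cc ∧ Y.Nonempty ∧ (NB bb cc G Y).card ≤ Y.card + 1

/-- Left vertices deleted in the course of a chase. -/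
def chaseLeft (b b' : β) (D : Finset γ) (g : γ → β) : Finset β := insert b (insert b' (D.image g))

/-- The state of a chase: starting from the removal of `b`, `b'` and `c`, the edges `(g d, d)`
have been removed one after the other, each time losing two units of matching number. -/
structure Chase (bb : ι → β) (cc : ι → γ) (r : ℕ) (G : Finset ι) (b b' : β) (c : γ)
    (D : Finset γ) (g : γ → β) : Prop where
  inj : Set.InjOn g D
  g_ne : ∀ d ∈ D, g d ≠ b ∧ g d ≠ b'
  notMem : c ∉ D
  edge : ∀ d ∈ D, ∃ f ∈ G, bb f = g d ∧ cc f = d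
  iness : ∀ d ∈ D, ∃ f ∈ G, bb f = g d ∧ cc f ∉ insert c D ∧
    Iness bb cc (del bb cc G (chaseLeft b b' D g) (insert c D)) (cc f)
  nu_eq : nu bb cc G = nu bb cc (del bb cc G (chaseLeft b b' D g) (insert c D)) + 2 * (D.card + 1)
  cost : G.card + 2 + D.card ≤
    (del bb cc G (chaseLeft b b' D g) (insert c D)).card + 3 * r + 2 * r * D.card

theorem Chase.card_left {b b' : β} {c : γ} {D : Finset γ} {g : γ → β}
    (h : Chase bb cc r G b b' c D g) (hb : b ≠ b') : (chaseLeft b b' D g).card = D.card + 2 := by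
  rw [chaseLeft, Finset.card_insert_of_notMem, Finset.card_insert_of_notMem,
    Finset.card_image_of_injOn h.inj]
  · intro hm
    obtain ⟨d, hd, hd2⟩ := Finset.mem_image.1 hm
    exact (h.g_ne d hd).2 hd2
  · intro hm
    rcases Finset.mem_insert.1 hm with hm | hm
    · exact hb hm
    obtain ⟨d, hd, hd2⟩ := Finset.mem_image.1 hm
    exact (h.g_ne d hd).1 hd2

theorem Chase.finish {e f : ι} {D : Finset γ} {g : γ → β}
    (h : Chase bb cc r G (bb e) (bb f) (cc e) D g) (o : Oracle bb cc N r G X)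
    (hess : ∀ c ∈ G.image cc, ¬ Iness bb cc G c)
    (htwin : ∀ c ∈ G.image cc, ∀ c' ∈ G.image cc, c ≠ c' → 3 ≤ (NB bb cc G {c, c'}).card)
    (he : e ∈ G) (hf : f ∈ G) (hfc : cc f = cc e) (hfb : bb e ≠ bb f)
    (hmin : (∃ Y, NearTight bb cc G Y ∧ cc e ∈ Y ∧ ∀ Z, NearTight bb cc G Z → Y.card ≤ Z.card) ∨
      ∀ Z, ¬ NearTight bb cc G Z)
    (hess' : ∀ c ∈ (del bb cc G (chaseLeft (bb e) (bb f) D g) (insert (cc e) D)).image cc,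
      ¬ Iness bb cc (del bb cc G (chaseLeft (bb e) (bb f) D g) (insert (cc e) D)) c) :
    Est bb cc N (del bb cc G (chaseLeft (bb e) (bb f) D g) (insert (cc e) D))
      (X - N * ((D.card + 1 : ℕ) : ℤ)) := by
  have hr := o.two_le
  have hcl := h.card_left hfb
  have hnu' := nu_eq_card_image hess'
  have hnu0 := nu_eq_card_image hess
  have hnueq := h.nu_eq
  have hcost := h.cost
  have hss : del bb cc G (chaseLeft (bb e) (bb f) D g) (insert (cc e) D) ⊂ G :=
    del_ssubset he (by simp)
  by_cases hj : 8 * r ≤ 6 * D.card + 14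
  · refine o.neutral _ _ hss hnueq.le ?_
    zify at *
    nlinarith
  push Not at hj
  set G' := del bb cc G (chaseLeft (bb e) (bb f) D g) (insert (cc e) D) with hG'
  set RC := insert (cc e) D with hRC
  set RB := chaseLeft (bb e) (bb f) D g with hRB
  have hRCcard : RC.card = D.card + 1 := Finset.card_insert_of_notMem h.notMem
  have hRC0 : RC ⊆ G.image cc := by
    intro d hd
    rcases Finset.mem_insert.1 hd with rfl | hd
    · exact Finset.mem_image_of_mem _ he
    · obtain ⟨f', hf', _, rfl⟩ := h.edge d hd
      exact Finset.mem_image_of_mem _ hf'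
  have hC' : G'.image cc ⊆ G.image cc \ RC := by
    intro d hd
    obtain ⟨x, hx, rfl⟩ := Finset.mem_image.1 hd
    have := mem_del.1 hx
    exact Finset.mem_sdiff.2 ⟨Finset.mem_image_of_mem _ this.1, this.2.2⟩
  set I := (G.image cc \ RC) \ G'.image cc with hI
  have hIcard : I.card = D.card + 1 := by
    rw [hI, Finset.card_sdiff_of_subset hC', Finset.card_sdiff_of_subset hRC0]
    omega
  have hIC : I ⊆ G.image cc := Finset.sdiff_subset.trans Finset.sdiff_subset
  have hIRC : ∀ d ∈ I, d ∉ RC := fun d hd => (Finset.mem_sdiff.1 (Finset.mem_sdiff.1 hd).1).2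
  have hNI : NB bb cc G I ⊆ RB := by
    intro x hx
    obtain ⟨g', hg', hgI, rfl⟩ := mem_NB.1 hx
    by_contra hcon
    refine (Finset.mem_sdiff.1 hgI).2 (Finset.mem_image_of_mem _ ?_)
    exact mem_del.2 ⟨hg', hcon, hIRC _ hgI⟩
  have hgNI : D.image g ⊆ NB bb cc G I := by
    intro x hx
    obtain ⟨d, hd, rfl⟩ := Finset.mem_image.1 hx
    obtain ⟨f', hf', h1, h2, h3⟩ := h.iness d hd
    refine mem_NB.2 ⟨f', hf', ?_, h1⟩
    refine Finset.mem_sdiff.2 ⟨Finset.mem_sdiff.2 ⟨Finset.mem_image_of_mem _ hf', h2⟩, ?_⟩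
    exact fun hcon => hess' _ hcon h3
  have hIne : I.Nonempty := Finset.card_pos.1 (by omega)
  have hNIcard : (NB bb cc G I).card ≤ I.card + 1 := by
    have := Finset.card_le_card hNI
    omega
  have hInt : NearTight bb cc G I := ⟨hIC, hIne, hNIcard⟩
  rcases hmin with ⟨Y, hY, heY, hYmin⟩ | hno
  swap
  · exact absurd hInt (hno I)
  have hYI := hYmin I hInt
  have hbeY : bb e ∈ NB bb cc G Y := mem_NB.2 ⟨e, he, heY, rfl⟩
  have hbfY : bb f ∈ NB bb cc G Y := mem_NB.2 ⟨f, hf, hfc ▸ heY, rfl⟩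
  have hceI : cc e ∉ I := fun hcon => hIRC _ hcon (Finset.mem_insert_self _ _)
  have hj1 : 1 ≤ D.card := by
    by_contra hcon
    have hD0 : D = ∅ := Finset.card_eq_zero.1 (by omega)
    obtain ⟨i, hi⟩ := Finset.card_eq_one.1 (show I.card = 1 by omega)
    have hY1 : Y = {cc e} := by
      refine (Finset.eq_of_subset_of_card_le (Finset.singleton_subset_iff.2 heY) ?_).symm
      rw [Finset.card_singleton]; omega
    have hpair : ({bb e, bb f} : Finset β).card = 2 := Finset.card_pair hfb
    have hNY : NB bb cc G Y = {bb e, bb f} := by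
      refine (Finset.eq_of_subset_of_card_le ?_ ?_).symm
      · exact Finset.insert_subset hbeY (Finset.singleton_subset_iff.2 hbfY)
      · have := hY.2.2
        rw [hY1, Finset.card_singleton] at this
        rw [hpair, hY1]; omega
    have hiC : i ∈ G.image cc := hIC (by rw [hi]; simp)
    have hei : cc e ≠ i := fun hcon => hceI (by rw [hi, hcon]; simp)
    have h3 := htwin (cc e) (Finset.mem_image_of_mem _ he) i hiC hei
    have h4 : NB bb cc G {cc e, i} ⊆ {bb e, bb f} := by
      rw [Finset.insert_eq, NB_union, ← hY1, ← hi, hNY]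
      refine Finset.union_subset subset_rfl (hNI.trans ?_)
      rw [hRB, chaseLeft, hD0]
      simp
    have := Finset.card_le_card h4
    omega
  have hpY := hY.2.2
  -- the intersection of the two neighbourhoods
  have hcapge : ∀ a : Finset γ, (∀ d ∈ a, d ∈ D ∧ d ∈ Y) →
      a.card + (NB bb cc G I).card ≤ (NB bb cc G Y ∩ NB bb cc G I).card + D.card := by
    intro a ha
    have h1 : NB bb cc G I = D.image g ∪ (NB bb cc G I ∩ {bb e, bb f}) := by
      ext x
      simp only [Finset.mem_union, Finset.mem_inter, Finset.mem_insert, Finset.mem_singleton]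
      constructor
      · intro hx
        have := hNI hx
        simp only [hRB, chaseLeft, Finset.mem_insert] at this
        tauto
      · rintro (hx | hx)
        · exact hgNI hx
        · exact hx.1
    have h2 : a.image g ∪ (NB bb cc G I ∩ {bb e, bb f}) ⊆ NB bb cc G Y ∩ NB bb cc G I := by
      intro x hx
      simp only [Finset.mem_union, Finset.mem_inter, Finset.mem_insert, Finset.mem_singleton] at hx
      rw [Finset.mem_inter]
      rcases hx with hx | ⟨h3, rfl | rfl⟩
      · obtain ⟨d, hd, rfl⟩ := Finset.mem_image.1 hx
        obtain ⟨hdD, hdY⟩ := ha d hd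
        obtain ⟨f', hf', h4, h5⟩ := h.edge d hdD
        exact ⟨mem_NB.2 ⟨f', hf', h5 ▸ hdY, h4⟩, hgNI (Finset.mem_image_of_mem _ hdD)⟩
      · exact ⟨hbeY, h3⟩
      · exact ⟨hbfY, h3⟩
    have hinj : Set.InjOn g (a : Set γ) := h.inj.mono fun d hd => (ha d hd).1
    have h3 := Finset.card_le_card h2
    rw [Finset.card_union_of_disjoint, Finset.card_image_of_injOn hinj] at h3
    · have h4 := Finset.card_union_le (D.image g) (NB bb cc G I ∩ {bb e, bb f})
      rw [← h1, Finset.card_image_of_injOn h.inj] at h4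
      omega
    · rw [Finset.disjoint_left]
      intro x hx hx2
      obtain ⟨d, hd, rfl⟩ := Finset.mem_image.1 hx
      have := h.g_ne d (ha d hd).1
      simp only [Finset.mem_inter, Finset.mem_insert, Finset.mem_singleton] at hx2
      tauto
  have hTN := NB_union (bb := bb) (cc := cc) G Y I
  have hTC : Y ∪ I ⊆ G.image cc := Finset.union_subset hY.1 hIC
  have hhall := card_le_card_NB hess hTC
  have hNTcard := Finset.card_union_add_card_inter (NB bb cc G Y) (NB bb cc G I)
  rw [← hTN] at hNTcard
  have hTcard := Finset.card_union_add_card_inter Y I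
  have hNT : (NB bb cc G (Y ∪ I)).card ≤ (Y ∪ I).card := by
    rcases (Y ∩ I).eq_empty_or_nonempty with h0 | hne
    · rw [h0, Finset.card_empty] at hTcard
      have := hcapge ∅ (by simp)
      rw [Finset.card_empty] at this
      omega
    · have h1 : ¬ NearTight bb cc G (Y ∩ I) := by
        intro hcon
        have h2 := hYmin _ hcon
        have h3 : Y ∩ I ⊂ Y := by
          refine (Finset.ssubset_iff_of_subset Finset.inter_subset_left).2 ⟨cc e, heY, ?_⟩
          simp [hceI]
        have := Finset.card_lt_card h3
        omega
      have h2 : (Y ∩ I).card + 1 < (NB bb cc G (Y ∩ I)).card := by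
        by_contra hcon
        exact h1 ⟨Finset.inter_subset_left.trans hY.1, hne, by omega⟩
      have h3 : NB bb cc G (Y ∩ I) ⊆ NB bb cc G Y ∩ NB bb cc G I :=
        Finset.subset_inter (NB_mono Finset.inter_subset_left) (NB_mono Finset.inter_subset_right)
      have := Finset.card_le_card h3
      omega
  have haw := hcapge (D ∩ Y) (fun d hd => by simpa using hd)
  have hx : (D ∩ Y).card + (Y ∩ I).card + 1 ≤ Y.card := by
    have h1 : insert (cc e) ((D ∩ Y) ∪ (Y ∩ I)) ⊆ Y :=
      Finset.insert_subset heY (Finset.union_subset Finset.inter_subset_right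
        Finset.inter_subset_left)
    have h2 := Finset.card_le_card h1
    rwa [Finset.card_insert_of_notMem, Finset.card_union_of_disjoint] at h2
    · rw [Finset.disjoint_left]
      intro d hd hd2
      exact hIRC d (Finset.mem_inter.1 hd2).2
        (Finset.mem_insert_of_mem (Finset.mem_inter.1 hd).1)
    · intro hm
      rcases Finset.mem_union.1 hm with hm | hm
      · exact h.notMem (Finset.mem_inter.1 hm).1
      · exact hceI (Finset.mem_inter.1 hm).2
  have hRBT : RB ⊆ NB bb cc G (Y ∪ I) := by
    rw [hTN, hRB, chaseLeft]
    refine Finset.insert_subset (Finset.mem_union_left _ hbeY)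
      (Finset.insert_subset (Finset.mem_union_left _ hbfY)
        (hgNI.trans Finset.subset_union_right))
  have hRCT : RC \ (Y ∪ I) = D \ Y := by
    ext d
    have h1 := hIRC d
    simp only [hRC, Finset.mem_sdiff, Finset.mem_insert, Finset.mem_union] at h1 ⊢
    constructor
    · rintro ⟨rfl | h2, h3⟩
      · tauto
      · tauto
    · rintro ⟨h2, h3⟩
      tauto
  refine o.eat hess hTC hNT hj _ RB RC (D.card + 1) 0 le_rfl hRBT ?_ ?_ hss hnueq ?_ ?_
  · rw [hRCT]
    have := Finset.card_sdiff_add_card_inter D Y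
    omega
  · rw [hRCT]
    intro d hd
    obtain ⟨hdD, _⟩ := Finset.mem_sdiff.1 hd
    obtain ⟨f', hf', h4, h5⟩ := h.edge d hdD
    refine ⟨f', hf', h5, hRBT ?_⟩
    rw [h4, hRB, chaseLeft]
    simp only [Finset.mem_insert, Finset.mem_image]
    exact Or.inr (Or.inr ⟨d, hdD, rfl⟩)
  · zify at *
    nlinarith
  · rw [Finset.card_sdiff_of_subset hRBT]
    omega

theorem Chase.extend {e f : ι} {D : Finset γ} {g : γ → β}
    (h : Chase bb cc r G (bb e) (bb f) (cc e) D g) (hdeg : MaxDeg bb cc r G)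
    {G' : Finset ι} (hG' : G' = del bb cc G (chaseLeft (bb e) (bb f) D g) (insert (cc e) D))
    {e0 f0 : ι} (he0 : e0 ∈ G') (hi : Iness bb cc G' (cc e0)) (hf0 : f0 ∈ G')
    (hfe : bb f0 = bb e0) (hni : ¬ Iness bb cc G' (cc f0))
    (hdrop : nu bb cc (del bb cc G' {bb f0} {cc f0}) + 1 < nu bb cc G') :
    Chase bb cc r G (bb e) (bb f) (cc e) (insert (cc f0) D)
      (Function.update g (cc f0) (bb f0)) ∧
    del bb cc G (chaseLeft (bb e) (bb f) (insert (cc f0) D) (Function.update g (cc f0) (bb f0)))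
      (insert (cc e) (insert (cc f0) D)) = del bb cc G' {bb f0} {cc f0} := by
  have hf0' := mem_del.1 (hG' ▸ hf0)
  have he0' := mem_del.1 (hG' ▸ he0)
  simp only [chaseLeft, Finset.mem_insert, not_or] at hf0' he0'
  obtain ⟨hf0G, ⟨hf0e, hf0f, hf0g⟩, hf0c, hf0D⟩ := hf0'
  obtain ⟨he0G, ⟨he0e, he0f, he0g⟩, he0c, he0D⟩ := he0'
  have hupd : ∀ d ∈ D, Function.update g (cc f0) (bb f0) d = g d := by
    intro d hd
    rw [Function.update_of_ne]
    rintro rfl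
    exact hf0D hd
  have himg : (insert (cc f0) D).image (Function.update g (cc f0) (bb f0)) =
      insert (bb f0) (D.image g) := by
    rw [Finset.image_insert, Function.update_self]
    congr 1
    exact Finset.image_congr hupd
  have heq : del bb cc G (chaseLeft (bb e) (bb f) (insert (cc f0) D)
      (Function.update g (cc f0) (bb f0))) (insert (cc e) (insert (cc f0) D)) =
      del bb cc G' {bb f0} {cc f0} := by
    rw [hG', del_del]
    ext x
    simp only [mem_del, chaseLeft, himg, Finset.mem_insert, Finset.mem_union, Finset.mem_singleton]
    tauto
  refine ⟨⟨?_, ?_, ?_, ?_, ?_, ?_, ?_⟩, heq⟩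
  · intro x hx y hy hxy
    simp only [Finset.coe_insert, Set.mem_insert_iff, Finset.mem_coe] at hx hy
    rcases hx with rfl | hx <;> rcases hy with rfl | hy
    · rfl
    · rw [Function.update_self, hupd y hy] at hxy
      exact absurd (Finset.mem_image.2 ⟨y, hy, hxy.symm⟩) hf0g
    · rw [Function.update_self, hupd x hx] at hxy
      exact absurd (Finset.mem_image.2 ⟨x, hx, hxy⟩) hf0g
    · rw [hupd x hx, hupd y hy] at hxy
      exact h.inj hx hy hxy
  · intro d hd
    rcases Finset.mem_insert.1 hd with rfl | hd
    · rw [Function.update_self]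
      exact ⟨hf0e, hf0f⟩
    · rw [hupd d hd]
      exact h.g_ne d hd
  · rw [Finset.mem_insert, not_or]
    exact ⟨Ne.symm hf0c, h.notMem⟩
  · intro d hd
    rcases Finset.mem_insert.1 hd with rfl | hd
    · exact ⟨f0, hf0G, by rw [Function.update_self], rfl⟩
    · rw [hupd d hd]
      exact h.edge d hd
  · rw [heq]
    have key : ∀ c, Iness bb cc G' c → c ≠ cc f0 ∧ Iness bb cc (del bb cc G' {bb f0} {cc f0}) c := by
      intro c hc
      refine ⟨fun h => hni (h ▸ hc), ?_⟩
      obtain ⟨M, hM, hMc⟩ := hc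
      have h1 : IsM bb cc (del bb cc M {bb f0} {cc f0}) := hM.2.1.mono (del_subset _ _ _)
      have h2 := h1.le_nu (del_mono hM.1 _ _)
      have h3 := hM.2.1.card_le_del {bb f0} {cc f0}
      have h4 := hM.2.2
      rw [Finset.card_singleton, Finset.card_singleton] at h3
      exact ⟨_, ⟨del_mono hM.1 _ _, h1, by omega⟩, fun x hx => hMc x (del_subset _ _ _ hx)⟩
    intro d hd
    rcases Finset.mem_insert.1 hd with rfl | hd
    · refine ⟨e0, he0G, by rw [Function.update_self, hfe], ?_, (key _ hi).2⟩
      simp only [Finset.mem_insert, not_or]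
      exact ⟨he0c, (key _ hi).1, he0D⟩
    · obtain ⟨x, hx, h1, h2, h3⟩ := h.iness d hd
      rw [← hG'] at h3
      refine ⟨x, hx, by rw [hupd d hd, h1], ?_, (key _ h3).2⟩
      simp only [Finset.mem_insert, not_or] at h2 ⊢
      exact ⟨h2.1, (key _ h3).1, h2.2⟩
  · rw [heq, Finset.card_insert_of_notMem hf0D]
    have h1 := h.nu_eq
    rw [← hG'] at h1
    have h2 := nu_le_del (bb := bb) (cc := cc) G' {bb f0} {cc f0}
    rw [Finset.card_singleton, Finset.card_singleton] at h2
    omega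
  · rw [heq, Finset.card_insert_of_notMem hf0D]
    have h1 := h.cost
    rw [← hG'] at h1
    have h2 := card_del_edge (bb := bb) (cc := cc) (r := r) (G := G')
      (hdeg.mono (hG' ▸ del_subset _ _ _)) (e := f0) (f := f0) hf0 rfl
    rw [mul_add]
    omega

theorem Chase.est {e f : ι} (o : Oracle bb cc N r G X)
    (hess : ∀ c ∈ G.image cc, ¬ Iness bb cc G c)
    (htwin : ∀ c ∈ G.image cc, ∀ c' ∈ G.image cc, c ≠ c' → 3 ≤ (NB bb cc G {c, c'}).card)
    (he : e ∈ G) (hf : f ∈ G) (hfc : cc f = cc e) (hfb : bb e ≠ bb f)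
    (hmin : (∃ Y, NearTight bb cc G Y ∧ cc e ∈ Y ∧ ∀ Z, NearTight bb cc G Z → Y.card ≤ Z.card) ∨
      ∀ Z, ¬ NearTight bb cc G Z) (n : ℕ) :
    ∀ (D : Finset γ) (g : γ → β), Chase bb cc r G (bb e) (bb f) (cc e) D g →
      (del bb cc G (chaseLeft (bb e) (bb f) D g) (insert (cc e) D)).card ≤ n →
      Est bb cc N (del bb cc G (chaseLeft (bb e) (bb f) D g) (insert (cc e) D))
        (X - N * ((D.card + 1 : ℕ) : ℤ)) := by
  have hr := o.two_le
  induction n with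
  | zero =>
    intro D g h hn
    refine h.finish o hess htwin he hf hfc hfb hmin ?_
    rw [Finset.card_eq_zero.1 (Nat.le_zero.1 hn)]
    simp
  | succ n ih =>
    intro D g h hn
    by_cases hess' : ∀ c ∈ (del bb cc G (chaseLeft (bb e) (bb f) D g) (insert (cc e) D)).image cc,
        ¬ Iness bb cc (del bb cc G (chaseLeft (bb e) (bb f) D g) (insert (cc e) D)) c
    · exact h.finish o hess htwin he hf hfc hfb hmin hess'
    push Not at hess'
    obtain ⟨c0, hc0, hi⟩ := hess'
    have hss : del bb cc G (chaseLeft (bb e) (bb f) D g) (insert (cc e) D) ⊂ G :=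
      del_ssubset he (by simp)
    have hnueq := h.nu_eq
    have hcost := h.cost
    set G' := del bb cc G (chaseLeft (bb e) (bb f) D g) (insert (cc e) D) with hG'
    obtain ⟨e0, he0, rfl⟩ := Finset.mem_image.1 hc0
    have hX : X - N * ((D.card + 1 : ℕ) : ℤ) - N = X - N * ((D.card + 2 : ℕ) : ℤ) := by
      push_cast; ring
    have gain : ∀ G'' ⊂ G', nu bb cc G' ≤ nu bb cc G'' + 1 → G'.card ≤ G''.card + 3 * r →
        Est bb cc N G'' (X - N * ((D.card + 1 : ℕ) : ℤ) - N) := by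
      intro G'' h1 h2 h3
      rw [hX]
      refine o.gain _ _ (h1.trans hss) (by omega) ?_
      zify at *
      nlinarith
    have hdeg : MaxDeg bb cc r G' := o.deg.mono hss.1
    refine Est.of_iness o.one_le hdeg he0 hi gain ?_
    intro f0 hf0 hfe hni
    have hlt : del bb cc G' {bb f0} {cc f0} ⊂ G' := del_ssubset hf0 (by simp)
    have hcard := card_del_edge hdeg hf0 (f := f0) rfl
    by_cases hdrop : nu bb cc G' ≤ nu bb cc (del bb cc G' {bb f0} {cc f0}) + 1
    · exact gain _ hlt hdrop (by omega)
    · obtain ⟨h1, h2⟩ := h.extend o.deg hG' he0 hi hf0 hfe hni (by omega)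
      have h3 := Finset.card_lt_card hlt
      have h4 := ih _ _ h1 (by rw [h2]; omega)
      rw [h2, Finset.card_insert_of_notMem] at h4
      · rw [hX]
        exact h4
      · have := (mem_del.1 (hG' ▸ hf0)).2.2
        simp only [Finset.mem_insert, not_or] at this
        exact this.2

/-- The decomposition when no right vertex is inessential, a leaf or a twin. -/
theorem Oracle.est_of_no_twins (o : Oracle bb cc N r G X) (hG : G.Nonempty)
    (hess : ∀ c ∈ G.image cc, ¬ Iness bb cc G c)
    (htwin : ∀ c ∈ G.image cc, ∀ c' ∈ G.image cc, c ≠ c' → 3 ≤ (NB bb cc G {c, c'}).card) :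
    Est bb cc N G X := by
  have hr := o.two_le
  obtain ⟨c, hc, hmin⟩ : ∃ c ∈ G.image cc,
      (∃ Y, NearTight bb cc G Y ∧ c ∈ Y ∧ ∀ Z, NearTight bb cc G Z → Y.card ≤ Z.card) ∨
      ∀ Z, ¬ NearTight bb cc G Z := by
    by_cases h : ∃ Z, NearTight bb cc G Z
    · classical
      have hex : ∃ n, ∃ Z, NearTight bb cc G Z ∧ Z.card = n := by
        obtain ⟨Z, hZ⟩ := h
        exact ⟨_, Z, hZ, rfl⟩
      obtain ⟨Y, hY, hYc⟩ := Nat.find_spec hex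
      obtain ⟨c, hc⟩ := hY.2.1
      refine ⟨c, hY.1 hc, Or.inl ⟨Y, hY, hc, fun Z hZ => ?_⟩⟩
      rw [hYc]
      exact Nat.find_min' hex ⟨Z, hZ, rfl⟩
    · push Not at h
      obtain ⟨x, hx⟩ := hG
      exact ⟨cc x, Finset.mem_image_of_mem _ hx, Or.inr h⟩
  obtain ⟨M, hM, e, he, rfl⟩ := exists_isMax_cover (bb := bb) hc
  have heG := hM.1 he
  have h1X : X - N = X - N * ((1 : ℕ) : ℤ) := by simp
  refine Est.of_edge o.one_le heG ?_ ?_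
  · intro f hf hfe
    rw [h1X]
    refine o.neutral _ 1 (del_ssubset heG (by simp)) ?_ ?_
    · have := nu_le_del (bb := bb) (cc := cc) G {bb e} {cc f}
      simpa using this
    · have := card_del_edge o.deg hf hfe.symm
      omega
  · intro f hf hfc hfb
    have h2 := hM.nu_le_del_pair he (bb f)
    have h3 := card_del_pair o.deg heG hf hfc hfb
    by_cases hg : nu bb cc G ≤ nu bb cc (del bb cc G {bb e, bb f} {cc e}) + 1
    · rw [h1X]
      refine o.gain _ 1 (del_ssubset heG (by simp)) (by omega) ?_
      zify at *
      nlinarith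
    · have heq : del bb cc G (chaseLeft (bb e) (bb f) (∅ : Finset γ) fun _ : γ => bb e) (insert (cc e) ∅) =
          del bb cc G {bb e, bb f} {cc e} := by
        simp [chaseLeft]
      have hch : Chase bb cc r G (bb e) (bb f) (cc e) (∅ : Finset γ) fun _ : γ => bb e := by
        refine ⟨by simp, by simp, by simp, by simp, by simp, ?_, ?_⟩
        · rw [heq, Finset.card_empty]
          omega
        · rw [heq, Finset.card_empty]
          omega
      have := Chase.est o hess htwin heG hf hfc (Ne.symm hfb) hmin _ _ _ hch le_rfl
      rw [heq] at this
      simpa using this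

end Bipartite

section Bipartite

variable {ι β γ : Type*} [DecidableEq ι] [DecidableEq β] [DecidableEq γ]
variable {bb : ι → β} {cc : ι → γ}
variable {N : ℤ} {r : ℕ} {G : Finset ι} {X : ℤ}

/-- `{b, b', c, c'}` spans a component of `G` which is an `r`-regular thickened four-cycle. -/
structure FullC4 (bb : ι → β) (cc : ι → γ) (r : ℕ) (G : Finset ι) (b b' : β) (c c' : γ) :
    Prop where
  left_ne : b ≠ b'
  right_ne : c ≠ c'
  closed : ∀ g ∈ G, (bb g = b ∨ bb g = b') ↔ (cc g = c ∨ cc g = c')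
  edge : ∀ x y, (x = b ∨ x = b') → (y = c ∨ y = c') → ∃ g ∈ G, bb g = x ∧ cc g = y
  deg_left : ∀ x, (x = b ∨ x = b') → (G.filter fun g => bb g = x).card = r
  deg_right : ∀ y, (y = c ∨ y = c') → (G.filter fun g => cc g = y).card = r

theorem Oracle.est_of_closed_twins (o : Oracle bb cc N r G X)
    (hC4 : ∀ b b' c c', FullC4 bb cc r G b b' c c' → Est bb cc N (del bb cc G {b, b'} ∅) (X - N))
    {b b' : β} {c c' : γ} (hb : b ≠ b') (hc : c ≠ c')
    (hedge : ∀ x y, (x = b ∨ x = b') → (y = c ∨ y = c') → ∃ g ∈ G, bb g = x ∧ cc g = y)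
    (hclosed : ∀ g ∈ G, (bb g = b ∨ bb g = b') ↔ (cc g = c ∨ cc g = c')) :
    Est bb cc N G X := by
  have hr := o.two_le
  obtain ⟨e, he, hbe, hce⟩ := hedge b c (Or.inl rfl) (Or.inl rfl)
  have h1X : X - N = X - N * ((1 : ℕ) : ℤ) := by simp
  refine Est.of_edge o.one_le he ?_ ?_
  · intro f hf hfe
    rw [h1X]
    refine o.neutral _ 1 (del_ssubset he (by simp)) ?_ ?_
    · have := nu_le_del (bb := bb) (cc := cc) G {bb e} {cc f}
      simpa using this
    · have := card_del_edge o.deg hf hfe.symm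
      omega
  · intro f hf hfc hfb
    have hfb' : bb f = b' := by
      have := (hclosed f hf).2 (Or.inl (hfc.trans hce))
      rw [← hbe] at this
      tauto
    have heq : del bb cc G {bb e, bb f} {cc e} = del bb cc G {b, b'} ∅ := by
      ext g
      have := hclosed g
      simp only [mem_del, Finset.mem_insert, Finset.mem_singleton, Finset.notMem_empty, hbe, hfb',
        hce]
      tauto
    rw [heq]
    have hcardP : ({b, b'} : Finset β).card = 2 := Finset.card_pair hb
    have hnu := nu_le_del (bb := bb) (cc := cc) G {b, b'} ∅
    rw [hcardP, Finset.card_empty] at hnu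
    have hsplit : G.card = (del bb cc G {b, b'} ∅).card +
        ((G.filter fun g => bb g = b).card + (G.filter fun g => bb g = b').card) := by
      rw [← Finset.card_union_of_disjoint, ← Finset.card_union_of_disjoint]
      · congr 1
        ext g
        simp only [mem_del, Finset.mem_union, Finset.mem_filter, Finset.mem_insert,
          Finset.mem_singleton, Finset.notMem_empty]
        tauto
      · rw [Finset.disjoint_left]
        intro g
        simp only [mem_del, Finset.mem_union, Finset.mem_filter, Finset.mem_insert,
          Finset.mem_singleton, Finset.notMem_empty]
        tauto
      · rw [Finset.disjoint_left]
        intro g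
        simp only [Finset.mem_filter]
        rintro ⟨_, h1⟩ ⟨_, h2⟩
        exact hb (h1.symm.trans h2)
    have hsplit' : (G.filter fun g => bb g = b).card + (G.filter fun g => bb g = b').card =
        (G.filter fun g => cc g = c).card + (G.filter fun g => cc g = c').card := by
      rw [← Finset.card_union_of_disjoint, ← Finset.card_union_of_disjoint]
      · congr 1
        ext g
        have := hclosed g
        simp only [Finset.mem_union, Finset.mem_filter]
        tauto
      · rw [Finset.disjoint_left]
        intro g
        simp only [Finset.mem_filter]
        rintro ⟨_, h1⟩ ⟨_, h2⟩
        exact hc (h1.symm.trans h2)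
      · rw [Finset.disjoint_left]
        intro g
        simp only [Finset.mem_filter]
        rintro ⟨_, h1⟩ ⟨_, h2⟩
        exact hb (h1.symm.trans h2)
    have d1 := o.deg.1 b
    have d2 := o.deg.1 b'
    have d3 := o.deg.2 c
    have d4 := o.deg.2 c'
    by_cases hlt : G.card + 1 ≤ (del bb cc G {b, b'} ∅).card + 2 * r
    · rw [h1X]
      exact o.neutral _ 1 (del_ssubset he (by simp [hbe])) (by omega) (by omega)
    · refine hC4 b b' c c' ⟨hb, hc, hclosed, hedge, ?_, ?_⟩
      · rintro x (rfl | rfl) <;> omega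
      · rintro x (rfl | rfl) <;> omega

theorem Oracle.est_of_open_twins (o : Oracle bb cc N r G X)
    {b b' : β} {c c' : γ} (hb : b ≠ b') (hc : c ≠ c')
    (hedge : ∀ x y, (x = b ∨ x = b') → (y = c ∨ y = c') → ∃ g ∈ G, bb g = x ∧ cc g = y)
    (hclosed : ∀ g ∈ G, (cc g = c ∨ cc g = c') → (bb g = b ∨ bb g = b'))
    {f0 : ι} (hf0 : f0 ∈ G) (hf0b : bb f0 = b) (hf0c : cc f0 ≠ c) (hf0c' : cc f0 ≠ c') :
    Est bb cc N G X := by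
  have hr := o.two_le
  have h1X : X - N = X - N * ((1 : ℕ) : ℤ) := by simp
  have hcardP : ({b, b'} : Finset β).card = 2 := Finset.card_pair hb
  obtain ⟨M0, hM0G, hM0, hM0c⟩ := exists_isMax bb cc (del bb cc G {b, b'} ∅)
  have hM0' : ∀ g ∈ M0, g ∈ G ∧ bb g ≠ b ∧ bb g ≠ b' ∧ cc g ≠ c ∧ cc g ≠ c' := by
    intro g hg
    have h1 := mem_del.1 (hM0G hg)
    have h2 := hclosed g h1.1
    simp only [Finset.mem_insert, Finset.mem_singleton] at h1
    tauto
  have hnu : nu bb cc G ≤ M0.card + 2 := by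
    have := nu_le_del (bb := bb) (cc := cc) G {b, b'} ∅
    rw [hcardP, Finset.card_empty] at this
    omega
  have gain : ∀ G' ⊂ G, (∀ g ∈ G, bb g ≠ b → bb g ≠ b' → cc g ≠ c' → g ∈ G') →
      (∃ x ∈ G', (bb x = b ∨ bb x = b') ∧ (cc x = c ∨ cc x = c')) → Est bb cc N G' (X - N) := by
    rintro G' hss hsub ⟨x, hx, hxb, hxc⟩
    have hM1 : IsM bb cc (insert x M0) := by
      refine hM0.insert fun g hg => ?_
      have := hM0' g hg
      constructor
      · rcases hxb with h | h <;> rw [h] <;> tauto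
      · rcases hxc with h | h <;> rw [h] <;> tauto
    have h1 := hM1.le_nu (G := G') (Finset.insert_subset hx fun g hg => by
      have := hM0' g hg
      exact hsub g this.1 this.2.1 this.2.2.1 this.2.2.2.2)
    rw [Finset.card_insert_of_notMem] at h1
    · have h2 := o.deg.card_le (G' := G') {b, b'} {c'} (by
        intro g h1 h2 h3
        simp only [Finset.mem_insert, Finset.mem_singleton, not_or] at h2 h3
        exact hsub g h1 h2.1 h2.2 h3)
      rw [hcardP, Finset.card_singleton] at h2
      rw [h1X]
      refine o.gain _ 1 hss (by omega) ?_
      zify at *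
      nlinarith
    · intro hcon
      have := hM0' x hcon
      tauto
  obtain ⟨e1, he1, he1b, he1c⟩ := hedge b' c (Or.inr rfl) (Or.inl rfl)
  obtain ⟨e2, he2, he2b, he2c⟩ := hedge b c (Or.inl rfl) (Or.inl rfl)
  obtain ⟨e, he, heb, hec⟩ := hedge b' c' (Or.inr rfl) (Or.inr rfl)
  -- remove the edges from `b'` to the outside
  refine Est.delete_set (G.filter fun g => bb g = b' ∧ cc g ≠ c ∧ cc g ≠ c')
    (Finset.filter_subset _ _) ?_ ?_
  · intro S' hS' f hf _
    have hf' := Finset.mem_filter.1 hf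
    have heq : away bb cc (G \ S') f = del bb cc G {bb f} {cc f} := by
      ext g
      have := @hS' g
      simp only [away, mem_del, Finset.mem_filter, Finset.mem_sdiff, Finset.mem_singleton] at *
      grind
    rw [heq, h1X]
    refine o.neutral _ 1 (del_ssubset hf'.1 (by simp)) ?_ ?_
    · have := nu_le_del (bb := bb) (cc := cc) G {bb f} {cc f}
      simpa using this
    · have := card_del_edge o.deg hf'.1 (f := f) rfl
      omega
  -- remove the edges from `b` to `c'`
  refine Est.delete_set (G.filter fun g => bb g = b ∧ cc g = c') ?_ ?_ ?_
  · intro g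
    simp only [Finset.mem_filter, Finset.mem_sdiff]
    tauto
  · intro S' hS' f hf _
    have hf' := Finset.mem_filter.1 hf
    refine gain _ ?_ ?_ ⟨e1, ?_, Or.inr he1b, Or.inl he1c⟩
    · refine (Finset.ssubset_iff_of_subset ?_).2 ⟨f, hf'.1, by simp [away]⟩
      intro g
      simp only [away, Finset.mem_filter, Finset.mem_sdiff]
      tauto
    · intro g
      have := @hS' g
      simp only [away, Finset.mem_filter, Finset.mem_sdiff] at *
      grind
    · have := @hS' e1
      simp only [away, Finset.mem_filter, Finset.mem_sdiff] at *
      grind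
  -- remove the edges from `b'` to `c`
  refine Est.delete_set (G.filter fun g => bb g = b' ∧ cc g = c) ?_ ?_ ?_
  · intro g
    simp only [Finset.mem_filter, Finset.mem_sdiff]
    grind
  · intro S' hS' f hf _
    have hf' := Finset.mem_filter.1 hf
    set G' := away bb cc (((G \ G.filter fun g => bb g = b' ∧ cc g ≠ c ∧ cc g ≠ c') \
      G.filter fun g => bb g = b ∧ cc g = c') \ S') f with hG'
    have hsub : ∀ g ∈ G, bb g ≠ b' → ¬ (bb g = b ∧ (cc g = c ∨ cc g = c')) → g ∈ G' := by
      intro g hg h1 h2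
      have h3 := hclosed g hg
      have := @hS' g
      simp only [hG', away, Finset.mem_filter, Finset.mem_sdiff] at *
      grind
    have hss : G' ⊂ G := by
      refine (Finset.ssubset_iff_of_subset ?_).2 ⟨f, hf'.1, by simp [hG', away]⟩
      intro g
      simp only [hG', away, Finset.mem_filter, Finset.mem_sdiff]
      tauto
    rw [h1X]
    refine o.neutral _ 1 hss ?_ ?_
    · have := hM0.le_nu (G := G') fun g hg => by
        have := hM0' g hg
        exact hsub g this.1 this.2.2.1 (by tauto)
      omega
    · have h1 : G ⊆ G' ∪ ((G.filter fun g => bb g = b') ∪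
          (G.filter fun g => bb g = b).erase f0) := by
        intro g hg
        have h2 := hsub g hg
        simp only [Finset.mem_union, Finset.mem_filter, Finset.mem_erase]
        grind
      have h2 := Finset.card_le_card h1
      have h3 := Finset.card_union_le G' ((G.filter fun g => bb g = b') ∪
          (G.filter fun g => bb g = b).erase f0)
      have h4 := Finset.card_union_le (G.filter fun g => bb g = b')
          ((G.filter fun g => bb g = b).erase f0)
      have h5 := Finset.card_erase_add_one (s := G.filter fun g => bb g = b) (a := f0)
        (by simp [hf0, hf0b])
      have d1 := o.deg.1 b
      have d2 := o.deg.1 b'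
      omega
  -- remove the remaining edges parallel to `e`
  refine Est.delete_set (G.filter fun g => bb g = b' ∧ cc g = c' ∧ g ≠ e) ?_ ?_ ?_
  · intro g
    simp only [Finset.mem_filter, Finset.mem_sdiff]
    grind
  · intro S' hS' f hf _
    have hf' := Finset.mem_filter.1 hf
    refine gain _ ?_ ?_ ⟨e2, ?_, Or.inl he2b, Or.inl he2c⟩
    · refine (Finset.ssubset_iff_of_subset ?_).2 ⟨f, hf'.1, by simp [away]⟩
      intro g
      simp only [away, Finset.mem_filter, Finset.mem_sdiff]
      tauto
    · intro g
      have := @hS' g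
      simp only [away, Finset.mem_filter, Finset.mem_sdiff] at *
      grind
    · have := @hS' e2
      simp only [away, Finset.mem_filter, Finset.mem_sdiff] at *
      grind
  refine Est.of_isolated o.one_le (e := e) ?_ ?_
  · simp only [Finset.mem_filter, Finset.mem_sdiff]
    grind
  · intro g
    have := hclosed g
    simp only [Finset.mem_filter, Finset.mem_sdiff]
    grind

/-- The decomposition when two right vertices see at most two left vertices. -/
theorem Oracle.est_of_twins (o : Oracle bb cc N r G X)
    (hC4 : ∀ b b' c c', FullC4 bb cc r G b b' c c' → Est bb cc N (del bb cc G {b, b'} ∅) (X - N))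
    {c c' : γ} (hc : c ≠ c') (h1 : 2 ≤ (NB bb cc G {c}).card) (h2 : 2 ≤ (NB bb cc G {c'}).card)
    (h3 : (NB bb cc G {c, c'}).card ≤ 2) : Est bb cc N G X := by
  have e1 : NB bb cc G {c} = NB bb cc G {c, c'} :=
    Finset.eq_of_subset_of_card_le (NB_mono (by simp)) (by omega)
  have e2 : NB bb cc G {c'} = NB bb cc G {c, c'} :=
    Finset.eq_of_subset_of_card_le (NB_mono (by simp)) (by omega)
  have h4 : (NB bb cc G {c, c'}).card = 2 := by rw [← e1] at h3 ⊢; omega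
  obtain ⟨b, b', hb, hbb⟩ := Finset.card_eq_two.1 h4
  have hclosed : ∀ g ∈ G, (cc g = c ∨ cc g = c') → (bb g = b ∨ bb g = b') := by
    intro g hg h
    have : bb g ∈ NB bb cc G {c, c'} := mem_NB.2 ⟨g, hg, by simpa using h, rfl⟩
    rw [hbb] at this
    simpa using this
  have hedge : ∀ x y, (x = b ∨ x = b') → (y = c ∨ y = c') → ∃ g ∈ G, bb g = x ∧ cc g = y := by
    intro x y hx hy
    have hx' : x ∈ NB bb cc G {c, c'} := by
      rw [hbb]
      simpa using hx
    have : x ∈ NB bb cc G {y} := by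
      rcases hy with rfl | rfl
      · rwa [e1]
      · rwa [e2]
    obtain ⟨g, hg, hgy, hgx⟩ := mem_NB.1 this
    exact ⟨g, hg, hgx, by simpa using hgy⟩
  by_cases hcl : ∀ g ∈ G, (bb g = b ∨ bb g = b') → (cc g = c ∨ cc g = c')
  · exact o.est_of_closed_twins hC4 hb hc hedge fun g hg => ⟨hcl g hg, hclosed g hg⟩
  push Not at hcl
  obtain ⟨f0, hf0, hf0b, hf0c, hf0c'⟩ := hcl
  rcases hf0b with hf0b | hf0b
  · exact o.est_of_open_twins hb hc hedge hclosed hf0 hf0b hf0c hf0c'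
  · exact o.est_of_open_twins hb.symm hc (fun x y hx hy => hedge x y hx.symm hy)
      (fun g hg h => (hclosed g hg h).symm) hf0 hf0b hf0c hf0c'

end Bipartite

section Bipartite

variable {ι β γ : Type*} [DecidableEq ι] [DecidableEq β] [DecidableEq γ]
variable {bb : ι → β} {cc : ι → γ}
variable {r : ℕ} {G : Finset ι}

theorem FullC4.mono {G' : Finset ι} {b b' : β} {c c' : γ} (h : FullC4 bb cc r G' b b' c c')
    (hdeg : MaxDeg bb cc r G) (hs : G' ⊆ G) : FullC4 bb cc r G b b' c c' := by
  have hl : ∀ x, (x = b ∨ x = b') →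
      (G'.filter fun g => bb g = x) = G.filter fun g => bb g = x := fun x hx =>
    Finset.eq_of_subset_of_card_le (Finset.filter_subset_filter _ hs)
      ((hdeg.1 x).trans (h.deg_left x hx).ge)
  have hr : ∀ y, (y = c ∨ y = c') →
      (G'.filter fun g => cc g = y) = G.filter fun g => cc g = y := fun y hy =>
    Finset.eq_of_subset_of_card_le (Finset.filter_subset_filter _ hs)
      ((hdeg.2 y).trans (h.deg_right y hy).ge)
  refine ⟨h.left_ne, h.right_ne, fun g hg => ⟨fun hx => ?_, fun hy => ?_⟩, ?_, ?_, ?_⟩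
  · have : g ∈ G'.filter fun g' => bb g' = bb g := by rw [hl _ hx]; simp [hg]
    exact (h.closed g (Finset.mem_filter.1 this).1).1 hx
  · have : g ∈ G'.filter fun g' => cc g' = cc g := by rw [hr _ hy]; simp [hg]
    exact (h.closed g (Finset.mem_filter.1 this).1).2 hy
  · intro x y hx hy
    obtain ⟨g, hg, h1⟩ := h.edge x y hx hy
    exact ⟨g, hs hg, h1⟩
  · intro x hx
    rw [← hl x hx, h.deg_left x hx]
  · intro y hy
    rw [← hr y hy, h.deg_right y hy]

theorem FullC4.pair_subset {b b' p p' x : β} {c c' d d' : γ} (h : FullC4 bb cc r G b b' c c')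
    (h' : FullC4 bb cc r G p p' d d') (hx : x = b ∨ x = b') (hx' : x = p ∨ x = p') :
    ({p, p'} : Finset β) ⊆ {b, b'} := by
  intro y hy
  simp only [Finset.mem_insert, Finset.mem_singleton] at hy ⊢
  obtain ⟨g, hg, hgx, hgd⟩ := h'.edge x d hx' (Or.inl rfl)
  have h1 := (h.closed g hg).1 (by rwa [hgx])
  obtain ⟨g', hg', hgy, hgd'⟩ := h'.edge y d hy (Or.inl rfl)
  have h2 := (h.closed g' hg').2 (by rwa [hgd', ← hgd])
  rwa [hgy] at h2

theorem FullC4.pair_eq {b b' p p' x : β} {c c' d d' : γ} (h : FullC4 bb cc r G b b' c c')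
    (h' : FullC4 bb cc r G p p' d d') (hx : x = b ∨ x = b') (hx' : x = p ∨ x = p') :
    ({p, p'} : Finset β) = {b, b'} :=
  (h.pair_subset h' hx hx').antisymm (h'.pair_subset h hx' hx)

open Classical in
/-- The left sides of the thickened four-cycle components of `G`. -/
noncomputable def fullPairs (bb : ι → β) (cc : ι → γ) (r : ℕ) (G : Finset ι) :
    Finset (Finset β) :=
  (G.image bb).powerset.filter fun P => ∃ b b' c c', P = {b, b'} ∧ FullC4 bb cc r G b b' c c'

theorem FullC4.subset_image {b b' : β} {c c' : γ} (h : FullC4 bb cc r G b b' c c') :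
    ({b, b'} : Finset β) ⊆ G.image bb := by
  intro x hx
  obtain ⟨g, hg, h1, _⟩ := h.edge x c (by simpa using hx) (Or.inl rfl)
  exact Finset.mem_image.2 ⟨g, hg, h1⟩

theorem mem_fullPairs {P : Finset β} : P ∈ fullPairs bb cc r G ↔
    ∃ b b' c c', P = {b, b'} ∧ FullC4 bb cc r G b b' c c' := by
  simp only [fullPairs, Finset.mem_filter, Finset.mem_powerset, and_iff_right_iff_imp]
  rintro ⟨b, b', c, c', rfl, h⟩
  exact h.subset_image

theorem fullPairs_mono {G' : Finset ι} (hdeg : MaxDeg bb cc r G) (hs : G' ⊆ G) :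
    fullPairs bb cc r G' ⊆ fullPairs bb cc r G := by
  intro P
  simp only [mem_fullPairs]
  rintro ⟨b, b', c, c', rfl, h⟩
  exact ⟨b, b', c, c', rfl, h.mono hdeg hs⟩

theorem fullPairs_disjoint {P Q : Finset β} (hP : P ∈ fullPairs bb cc r G)
    (hQ : Q ∈ fullPairs bb cc r G) (hne : P ≠ Q) : Disjoint P Q := by
  obtain ⟨b, b', c, c', rfl, h⟩ := mem_fullPairs.1 hP
  obtain ⟨p, p', d, d', rfl, h'⟩ := mem_fullPairs.1 hQ
  rw [Finset.disjoint_left]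
  intro x hx hx'
  exact hne (h.pair_eq h' (by simpa using hx) (by simpa using hx')).symm

theorem FullC4.card_star {b b' : β} {c c' : γ} (h : FullC4 bb cc r G b b' c c') :
    (G.filter fun g => bb g ∈ ({b, b'} : Finset β)).card = 2 * r := by
  rw [two_mul]
  conv_rhs => rw [← h.deg_left b (Or.inl rfl)]
  conv_rhs => rhs; rw [h.deg_left b (Or.inl rfl), ← h.deg_left b' (Or.inr rfl)]
  rw [← Finset.card_union_of_disjoint]
  · congr 1
    ext g
    simp only [Finset.mem_filter, Finset.mem_insert, Finset.mem_singleton, Finset.mem_union]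
    tauto
  · rw [Finset.disjoint_left]
    intro g
    simp only [Finset.mem_filter]
    rintro ⟨_, h1⟩ ⟨_, h2⟩
    exact h.left_ne (h1.symm.trans h2)

theorem card_fullPairs_mul_le (G : Finset ι) : (fullPairs bb cc r G).card * (2 * r) ≤ G.card := by
  have h1 : ((fullPairs bb cc r G).biUnion fun P => G.filter fun g => bb g ∈ P).card =
      (fullPairs bb cc r G).card * (2 * r) := by
    rw [Finset.card_biUnion, Finset.sum_const_nat]
    · intro P hP
      obtain ⟨b, b', c, c', rfl, h⟩ := mem_fullPairs.1 hP
      exact h.card_star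
    · intro P hP Q hQ hne
      have := fullPairs_disjoint hP hQ hne
      rw [Function.onFun, Finset.disjoint_left] at *
      intro g hg hg'
      exact this (Finset.mem_filter.1 hg).2 (Finset.mem_filter.1 hg').2
  rw [← h1]
  exact Finset.card_le_card (Finset.biUnion_subset.2 fun P _ => Finset.filter_subset _ _)

/-- The potential bounding the acyclicity of the matching complex of `G` from below. -/
noncomputable def potential (bb : ι → β) (cc : ι → γ) (r : ℕ) (G : Finset ι) : ℤ :=
  (12 * (r : ℤ) ^ 2 - 8 * r + 1) * nu bb cc G + 8 * G.card - 2 * (fullPairs bb cc r G).card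

theorem est_potential (hr : 2 ≤ r) (G : Finset ι) (hdeg : MaxDeg bb cc r G) :
    Est bb cc (24 * (r : ℤ) ^ 2) G (potential bb cc r G) := by
  induction G using Finset.strongInduction with
  | H G ih =>
  have hr' : (2 : ℤ) ≤ r := by exact_mod_cast hr
  have hN : (1 : ℤ) ≤ 24 * (r : ℤ) ^ 2 := by nlinarith
  have hcoef : (0 : ℤ) ≤ 12 * (r : ℤ) ^ 2 - 8 * r + 1 := by nlinarith
  have hq : ∀ G' ⊂ G, ((fullPairs bb cc r G').card : ℤ) ≤ (fullPairs bb cc r G).card := by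
    intro G' hs
    exact_mod_cast Finset.card_le_card (fullPairs_mono hdeg hs.1)
  have o : Oracle bb cc (24 * (r : ℤ) ^ 2) r G (potential bb cc r G) := by
    refine ⟨hN, hr, hdeg, ?_, ?_⟩
    · intro G' s hs h1 h2
      refine (ih G' hs (hdeg.mono hs.1)).mono ?_
      have := hq G' hs
      rw [potential, potential]
      zify at h1 h2
      nlinarith [mul_le_mul_of_nonneg_left h1 hcoef]
    · intro G' s hs h1 h2
      refine (ih G' hs (hdeg.mono hs.1)).mono ?_
      have := hq G' hs
      rw [potential, potential]
      zify at h1 h2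
      nlinarith [mul_le_mul_of_nonneg_left h1 hcoef]
  have hC4 : ∀ b b' c c', FullC4 bb cc r G b b' c c' →
      Est bb cc (24 * (r : ℤ) ^ 2) (del bb cc G {b, b'} ∅)
        (potential bb cc r G - 24 * (r : ℤ) ^ 2) := by
    intro b b' c c' h
    obtain ⟨e, he, hbe, hce⟩ := h.edge b c (Or.inl rfl) (Or.inl rfl)
    have hs : del bb cc G {b, b'} ∅ ⊂ G := del_ssubset he (by simp [hbe])
    refine (ih _ hs (hdeg.mono hs.1)).mono ?_
    have h1 := nu_le_del (bb := bb) (cc := cc) G {b, b'} ∅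
    have h2 := hdeg.card_le (G' := del bb cc G {b, b'} ∅) {b, b'} ∅ fun g hg h1 h2 =>
      mem_del.2 ⟨hg, h1, h2⟩
    rw [Finset.card_pair h.left_ne, Finset.card_empty] at h1 h2
    have h3 : (fullPairs bb cc r (del bb cc G {b, b'} ∅)).card <
        (fullPairs bb cc r G).card := by
      refine Finset.card_lt_card ((Finset.ssubset_iff_of_subset (fullPairs_mono hdeg hs.1)).2
        ⟨{b, b'}, mem_fullPairs.2 ⟨b, b', c, c', rfl, h⟩, fun hcon => ?_⟩)
      obtain ⟨p, p', d, d', heq, h'⟩ := mem_fullPairs.1 hcon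
      have h4 := h'.subset_image
      rw [← heq] at h4
      obtain ⟨g, hg, hgb⟩ := Finset.mem_image.1 (h4 (Finset.mem_insert_self b _))
      exact (mem_del.1 hg).2.1 (by simp [hgb])
    rw [potential, potential]
    zify at h1 h2 h3
    nlinarith [mul_le_mul_of_nonneg_left h1 hcoef]
  have h1X : ∀ x N : ℤ, x - N = x - N * ((1 : ℕ) : ℤ) := by simp
  rcases G.eq_empty_or_nonempty with hG | hG
  · have h1 : nu bb cc G = 0 := by
      have := nu_le_card_image (bb := bb) (cc := cc) G
      rw [hG] at this ⊢
      simpa using this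
    refine ⟨0, ?_, Good.zero _⟩
    rw [potential, h1, hG]
    simp
  by_cases hess : ∀ c ∈ G.image cc, ¬ Iness bb cc G c
  swap
  · push Not at hess
    obtain ⟨c, hc, hi⟩ := hess
    obtain ⟨e, he, rfl⟩ := Finset.mem_image.1 hc
    refine Est.of_iness hN hdeg he hi ?_ ?_
    · intro G' hs h1 h2
      rw [h1X]
      refine o.gain _ 1 hs (by omega) ?_
      zify at *
      nlinarith
    · intro f hf hfe _
      rw [h1X]
      refine o.neutral _ 1 (del_ssubset hf (by simp)) ?_ ?_
      · have := nu_le_del (bb := bb) (cc := cc) G {bb f} {cc f}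
        simpa using this
      · have := card_del_edge hdeg hf (f := f) rfl
        omega
  by_cases hleaf : ∀ c ∈ G.image cc, 2 ≤ (NB bb cc G {c}).card
  swap
  · push Not at hleaf
    obtain ⟨c, hc, hi⟩ := hleaf
    obtain ⟨e, he, rfl⟩ := Finset.mem_image.1 hc
    refine Est.of_edge hN he ?_ ?_
    · intro f hf hfe
      rw [h1X]
      refine o.neutral _ 1 (del_ssubset he (by simp)) ?_ ?_
      · have := nu_le_del (bb := bb) (cc := cc) G {bb e} {cc f}
        simpa using this
      · have := card_del_edge hdeg hf hfe.symm
        omega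
    · intro f hf hfc hfb
      have h1 : ({bb f, bb e} : Finset β) ⊆ NB bb cc G {cc e} := by
        intro x hx
        simp only [Finset.mem_insert, Finset.mem_singleton] at hx
        rcases hx with rfl | rfl
        · exact mem_NB.2 ⟨f, hf, by simp [hfc], rfl⟩
        · exact mem_NB.2 ⟨e, he, by simp, rfl⟩
      have h2 := Finset.card_le_card h1
      rw [Finset.card_pair hfb] at h2
      omega
  by_cases htwin : ∀ c ∈ G.image cc, ∀ c' ∈ G.image cc, c ≠ c' → 3 ≤ (NB bb cc G {c, c'}).card
  · exact o.est_of_no_twins hG hess htwin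
  · push Not at htwin
    obtain ⟨c, hc, c', hc', hne, h3⟩ := htwin
    exact o.est_of_twins hC4 hne (hleaf c hc) (hleaf c' hc') (by omega)

end Bipartite

section Bipartite

variable {ι β γ : Type*} [DecidableEq ι] [DecidableEq β] [DecidableEq γ]
variable {bb : ι → β} {cc : ι → γ}
variable {r : ℕ} {G : Finset ι}

theorem le_nu_of_lt_card (hdeg : MaxDeg bb cc r G) {t : ℕ} (ht : r * t < G.card) :
    t + 1 ≤ nu bb cc G := by
  set B := G.image bb with hB
  have hGB : G.card ≤ B.card * r := by
    have h1 := hdeg.card_left B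
    rwa [Finset.filter_true_of_mem fun g hg => Finset.mem_image_of_mem _ hg] at h1
  have htB : t + 1 ≤ B.card := by
    by_contra hcon
    have : B.card ≤ t := by omega
    nlinarith
  obtain ⟨δ, hδ⟩ := Nat.exists_eq_add_of_le htB
  let nbr : B → Finset (γ ⊕ Fin δ) := fun b =>
    ((G.filter fun g => bb g = b).image cc).disjSum Finset.univ
  obtain ⟨f, hf, hfn⟩ := (Finset.all_card_le_biUnion_card_iff_exists_injective nbr).1 (by
    intro s
    rcases s.eq_empty_or_nonempty with rfl | ⟨b0, hb0⟩
    · simp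
    set Ns := (G.filter fun g => ∃ b ∈ s, bb g = b).image cc with hNs
    have h1 : Ns.disjSum (Finset.univ : Finset (Fin δ)) ⊆ s.biUnion nbr := by
      intro x hx
      rw [Finset.mem_biUnion]
      rcases x with c | i
      · simp only [Finset.inl_mem_disjSum, hNs, Finset.mem_image, Finset.mem_filter] at hx
        obtain ⟨g, ⟨hg, b, hb, hgb⟩, rfl⟩ := hx
        refine ⟨b, hb, ?_⟩
        simp only [nbr, Finset.inl_mem_disjSum, Finset.mem_image, Finset.mem_filter]
        exact ⟨g, ⟨hg, hgb⟩, rfl⟩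
      · exact ⟨b0, hb0, by simp [nbr]⟩
    have h2 := Finset.card_le_card h1
    rw [Finset.card_disjSum, Finset.card_univ, Fintype.card_fin] at h2
    have h3 := hdeg.card_le (G' := ∅) (B \ s.map (Function.Embedding.subtype _)) Ns (by
      intro g hg h1 h2
      exfalso
      refine h2 (Finset.mem_image_of_mem _ (Finset.mem_filter.2 ⟨hg, ?_⟩))
      rw [Finset.mem_sdiff, not_and, not_not] at h1
      obtain ⟨b, hb, hb'⟩ := Finset.mem_map.1 (h1 (Finset.mem_image_of_mem _ hg))
      exact ⟨b, hb, hb'.symm⟩)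
    rw [Finset.card_empty, Finset.card_sdiff_of_subset, Finset.card_map] at h3
    · by_contra hcon
      have h5 : s.card ≤ B.card := by
        simpa using Finset.card_le_univ s
      have h4 : B.card - s.card + Ns.card ≤ t := by omega
      nlinarith
    · intro x hx
      obtain ⟨b, _, rfl⟩ := Finset.mem_map.1 hx
      exact b.2)
  set S := (Finset.univ : Finset B).filter fun b => (f b).isLeft with hS
  have hSc : t + 1 ≤ S.card := by
    have h1 : ((Finset.univ : Finset B).filter fun b => ¬ (f b).isLeft = true).card ≤ δ := by
      have h2 : ((Finset.univ : Finset B).filter fun b => ¬ (f b).isLeft = true).image f ⊆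
          (Finset.univ : Finset (Fin δ)).image Sum.inr := by
        intro x hx
        obtain ⟨b, hb, rfl⟩ := Finset.mem_image.1 hx
        have := (Finset.mem_filter.1 hb).2
        rcases hfb : f b with c | i
        · simp [hfb] at this
        · simp
      have h3 := Finset.card_le_card h2
      rw [Finset.card_image_of_injective _ hf,
        Finset.card_image_of_injective _ Sum.inr_injective, Finset.card_univ,
        Fintype.card_fin] at h3
      exact h3
    have h2 : S.card + ((Finset.univ : Finset B).filter fun b => ¬ (f b).isLeft = true).card =
        (Finset.univ : Finset B).card := Finset.card_filter_add_card_filter_not _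
    rw [Finset.card_univ, Fintype.card_coe] at h2
    omega
  have hw : ∀ b ∈ S, ∃ g ∈ G, bb g = b ∧ f b = Sum.inl (cc g) := by
    intro b hb
    have h1 := (Finset.mem_filter.1 hb).2
    have h2 := hfn b
    rcases hfb : f b with c | i
    · rw [hfb] at h2
      simp only [nbr, Finset.inl_mem_disjSum, Finset.mem_image, Finset.mem_filter] at h2
      obtain ⟨g, ⟨hg, hgb⟩, rfl⟩ := h2
      exact ⟨g, hg, hgb, rfl⟩
    · simp [hfb] at h1
  have : Nonempty ι := by
    obtain ⟨g, _⟩ := Finset.card_pos.1 (show 0 < G.card by omega)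
    exact ⟨g⟩
  choose! w hwG hwb hwc using hw
  have hinj : Set.InjOn w S := by
    intro x hx y hy hxy
    exact Subtype.ext ((hwb x hx).symm.trans ((congrArg bb hxy).trans (hwb y hy)))
  have hM : IsM bb cc (S.image w) := by
    constructor
    · intro x hx y hy hxy
      obtain ⟨a, ha, rfl⟩ := Finset.mem_image.1 (Finset.mem_coe.1 hx)
      obtain ⟨a', ha', rfl⟩ := Finset.mem_image.1 (Finset.mem_coe.1 hy)
      rw [hwb a ha, hwb a' ha'] at hxy
      rw [Subtype.ext hxy]
    · intro x hx y hy hxy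
      obtain ⟨a, ha, rfl⟩ := Finset.mem_image.1 (Finset.mem_coe.1 hx)
      obtain ⟨a', ha', rfl⟩ := Finset.mem_image.1 (Finset.mem_coe.1 hy)
      have : f a = f a' := by rw [hwc a ha, hwc a' ha', hxy]
      rw [hf this]
  have := hM.le_nu (G := G) (Finset.image_subset_iff.2 hwG)
  rw [Finset.card_image_of_injOn hinj] at this
  omega

theorem card_le_mul_nu (hdeg : MaxDeg bb cc r G) : G.card ≤ r * nu bb cc G := by
  by_contra hcon
  have := le_nu_of_lt_card hdeg (not_le.1 hcon)
  omega

theorem mul_card_le_potential (hr : 2 ≤ r) (hdeg : MaxDeg bb cc r G) :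
    (12 * (r : ℤ) ^ 2 + 1) * G.card - 2 * r * (fullPairs bb cc r G).card ≤
      r * potential bb cc r G := by
  have h1 := card_le_mul_nu hdeg
  have hr' : (2 : ℤ) ≤ r := by exact_mod_cast hr
  have hcoef : (0 : ℤ) ≤ 12 * (r : ℤ) ^ 2 - 8 * r + 1 := by nlinarith
  zify at h1
  rw [potential]
  nlinarith [mul_le_mul_of_nonneg_left h1 hcoef]

end Bipartite

section Rainbow

variable {ι α β γ : Type*} [DecidableEq ι] [DecidableEq α] [DecidableEq β] [DecidableEq γ]
variable {aa : ι → α} {bb : ι → β} {cc : ι → γ}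
variable {r : ℕ}

theorem card_le_of_label_degree [Fintype α] {E : Finset ι}
    (hA : ∀ a, (E.filter fun e => aa e = a).card ≤ r) (S : Finset α) :
    (E.filter fun e => aa e ∈ S).card ≤ S.card * r := by
  have := Finset.card_le_mul_card_image_of_maps_to
    (s := E.filter fun e => aa e ∈ S) (t := S) (f := aa)
    (by intro x hx; exact (Finset.mem_filter.1 hx).2) r
    (by
      intro a _
      refine (Finset.card_le_card ?_).trans (hA a)
      intro x
      simp only [Finset.mem_filter]
      tauto)
  rwa [mul_comm] at this

/-- A tripartite edge set with all degrees at most `r` has a matching covering `1/(2r)` of its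
edges. -/
theorem exists_rainbow [Finite ι] [Fintype α] (hr : 2 ≤ r) {E : Finset ι}
    (hA : ∀ a, (E.filter fun e => aa e = a).card ≤ r) (hdeg : MaxDeg bb cc r E) :
    ∃ σ ⊆ E, IsM bb cc σ ∧ Set.InjOn aa σ ∧ E.card ≤ 2 * r * σ.card := by
  by_contra hcon
  push Not at hcon
  have h0 := hcon ∅ (by simp) (by simp [IsM]) (by simp)
  rw [Finset.card_empty, mul_zero] at h0
  obtain ⟨S, hS⟩ := exists_deficient_set bb cc E aa ((E.card - 1) / (2 * r)) (by
    intro σ h1 h2 h3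
    rw [Nat.le_div_iff_mul_le (by omega), mul_comm]
    have := hcon σ h1 h2 h3
    omega)
  have hd := hdeg.mono (Finset.filter_subset (fun e => aa e ∈ S) E)
  obtain ⟨k, hk, hg⟩ := est_potential hr _ hd
  have h1 := hS k hg
  have h2 := mul_card_le_potential hr hd
  have h3 := card_fullPairs_mul_le (bb := bb) (cc := cc) (r := r) (E.filter fun e => aa e ∈ S)
  have h4 := Finset.card_filter_add_card_filter_not (s := E) fun e => aa e ∈ S
  have h5 : (E.filter fun e => ¬ aa e ∈ S).card ≤ (Fintype.card α - S.card) * r := by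
    have := card_le_of_label_degree hA Sᶜ
    rw [Finset.card_compl] at this
    simpa using this
  have h6 := Nat.div_mul_le_self (E.card - 1) (2 * r)
  have h7 : S.card ≤ Fintype.card α := Finset.card_le_univ S
  have h8 : ((E.filter fun e => aa e ∈ S).card : ℤ) ≤ 2 * r * k := by
    have hr' : (2 : ℤ) ≤ r := by exact_mod_cast hr
    zify at h3
    have h9 : 12 * (r : ℤ) ^ 2 * (E.filter fun e => aa e ∈ S).card ≤
        12 * (r : ℤ) ^ 2 * (2 * r * k) := by nlinarith
    exact le_of_mul_le_mul_left h9 (by positivity)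
  obtain ⟨d, hd'⟩ := Nat.exists_eq_add_of_le h7
  rw [hd', Nat.add_sub_cancel_left] at h5
  have h8' : (E.filter fun e => aa e ∈ S).card ≤ 2 * r * k := by exact_mod_cast h8
  have h9 : k + d ≤ (E.card - 1) / (2 * r) := by omega
  have h10 : (k + d) * (2 * r) ≤ E.card - 1 := (Nat.mul_le_mul_right _ h9).trans h6
  have h11 : (k + d) * (2 * r) = 2 * r * k + 2 * (d * r) := by ring
  omega

end Rainbow

section Rainbow

variable {ι α β γ : Type*} [DecidableEq ι] [DecidableEq α] [DecidableEq β] [DecidableEq γ]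
variable {aa : ι → α} {bb : ι → β} {cc : ι → γ}
variable {r : ℕ} {G : Finset ι}

/-- The vertices `x, y, b, b', c, c'` span `(r/2) • F` in `G`, and `b, b', c, c'` span a component
of the link graph. -/
structure FanoAt (aa : ι → α) (bb : ι → β) (cc : ι → γ) (r : ℕ) (G : Finset ι)
    (x y : α) (b b' : β) (c c' : γ) : Prop where
  full : FullC4 bb cc r G b b' c c'
  ne : x ≠ y
  card₁ : 2 * (G.filter fun g => aa g = x ∧ bb g = b ∧ cc g = c).card = r
  card₂ : 2 * (G.filter fun g => aa g = x ∧ bb g = b' ∧ cc g = c').card = r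
  card₃ : 2 * (G.filter fun g => aa g = y ∧ bb g = b ∧ cc g = c').card = r
  card₄ : 2 * (G.filter fun g => aa g = y ∧ bb g = b' ∧ cc g = c).card = r

/-- Some two disjoint edges inside `P` have different labels. -/
def IsSplit (aa : ι → α) (bb : ι → β) (cc : ι → γ) (G : Finset ι) (P : Finset β) : Prop :=
  ∃ e ∈ G, ∃ f ∈ G, bb e ∈ P ∧ bb f ∈ P ∧ bb e ≠ bb f ∧ cc e ≠ cc f ∧ aa e ≠ aa f

theorem exists_fanoAt (hr : 2 ≤ r) (hA : ∀ a, (G.filter fun e => aa e = a).card ≤ r)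
    {b b' : β} {c c' : γ} (h : FullC4 bb cc r G b b' c c') (hs : ¬ IsSplit aa bb cc G {b, b'}) :
    ∃ x y, FanoAt aa bb cc r G x y b b' c c' := by
  have hs' : ∀ e ∈ G, ∀ f ∈ G, bb e = b → bb f = b' → cc e ≠ cc f → aa e = aa f := by
    intro e he f hf h1 h2 h3
    by_contra hcon
    exact hs ⟨e, he, f, hf, by simp [h1], by simp [h2], by rw [h1, h2]; exact h.left_ne, h3, hcon⟩
  obtain ⟨e₁, he₁, hb₁, hc₁⟩ := h.edge b c (Or.inl rfl) (Or.inl rfl)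
  obtain ⟨e₂, he₂, hb₂, hc₂⟩ := h.edge b' c' (Or.inr rfl) (Or.inr rfl)
  obtain ⟨e₃, he₃, hb₃, hc₃⟩ := h.edge b c' (Or.inl rfl) (Or.inr rfl)
  obtain ⟨e₄, he₄, hb₄, hc₄⟩ := h.edge b' c (Or.inr rfl) (Or.inl rfl)
  have hcc := h.right_ne
  have l₂ : ∀ g ∈ G, bb g = b' → cc g = c' → aa g = aa e₁ := fun g hg h1 h2 =>
    (hs' e₁ he₁ g hg hb₁ h1 (by rw [hc₁, h2]; exact hcc)).symm
  have l₁ : ∀ g ∈ G, bb g = b → cc g = c → aa g = aa e₁ := fun g hg h1 h2 =>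
    (hs' g hg e₂ he₂ h1 hb₂ (by rw [hc₂, h2]; exact hcc)).trans (l₂ e₂ he₂ hb₂ hc₂)
  have l₄ : ∀ g ∈ G, bb g = b' → cc g = c → aa g = aa e₃ := fun g hg h1 h2 =>
    (hs' e₃ he₃ g hg hb₃ h1 (by rw [hc₃, h2]; exact hcc.symm)).symm
  have l₃ : ∀ g ∈ G, bb g = b → cc g = c' → aa g = aa e₃ := fun g hg h1 h2 =>
    (hs' g hg e₄ he₄ h1 hb₄ (by rw [hc₄, h2]; exact hcc.symm)).trans (l₄ e₄ he₄ hb₄ hc₄)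
  have q₁ : (G.filter fun g => aa g = aa e₁ ∧ bb g = b ∧ cc g = c) =
      G.filter fun g => bb g = b ∧ cc g = c :=
    Finset.filter_congr fun g hg => ⟨fun h => h.2, fun h => ⟨l₁ g hg h.1 h.2, h⟩⟩
  have q₂ : (G.filter fun g => aa g = aa e₁ ∧ bb g = b' ∧ cc g = c') =
      G.filter fun g => bb g = b' ∧ cc g = c' :=
    Finset.filter_congr fun g hg => ⟨fun h => h.2, fun h => ⟨l₂ g hg h.1 h.2, h⟩⟩
  have q₃ : (G.filter fun g => aa g = aa e₃ ∧ bb g = b ∧ cc g = c') =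
      G.filter fun g => bb g = b ∧ cc g = c' :=
    Finset.filter_congr fun g hg => ⟨fun h => h.2, fun h => ⟨l₃ g hg h.1 h.2, h⟩⟩
  have q₄ : (G.filter fun g => aa g = aa e₃ ∧ bb g = b' ∧ cc g = c) =
      G.filter fun g => bb g = b' ∧ cc g = c :=
    Finset.filter_congr fun g hg => ⟨fun h => h.2, fun h => ⟨l₄ g hg h.1 h.2, h⟩⟩
  have add : ∀ p q s : ι → Prop, ∀ [DecidablePred p] [DecidablePred q] [DecidablePred s],
      (∀ g ∈ G, p g → ¬ q g) → (∀ g ∈ G, p g ∨ q g → s g) →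
      (G.filter p).card + (G.filter q).card ≤ (G.filter s).card := by
    intro p q s _ _ _ h1 h2
    rw [← Finset.card_union_of_disjoint]
    · refine Finset.card_le_card fun g => ?_
      have := h2 g
      simp only [Finset.mem_union, Finset.mem_filter]
      tauto
    · rw [Finset.disjoint_left]
      intro g hg hg'
      rw [Finset.mem_filter] at hg hg'
      exact h1 g hg.1 hg.2 hg'.2
  have sub : ∀ p q s : ι → Prop, ∀ [DecidablePred p] [DecidablePred q] [DecidablePred s],
      (∀ g ∈ G, s g → p g ∨ q g) →
      (G.filter s).card ≤ (G.filter p).card + (G.filter q).card := by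
    intro p q s _ _ _ h2
    refine le_trans (Finset.card_le_card ?_) (Finset.card_union_le _ _)
    intro g
    have := h2 g
    simp only [Finset.mem_union, Finset.mem_filter]
    tauto
  have cl := h.closed
  have b₁ := sub (fun g => bb g = b ∧ cc g = c) (fun g => bb g = b ∧ cc g = c')
    (fun g => bb g = b) (fun g hg h1 => by have := cl g hg; tauto)
  have b₂ := sub (fun g => bb g = b' ∧ cc g = c) (fun g => bb g = b' ∧ cc g = c')
    (fun g => bb g = b') (fun g hg h1 => by have := cl g hg; tauto)
  have b₃ := sub (fun g => bb g = b ∧ cc g = c) (fun g => bb g = b' ∧ cc g = c)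
    (fun g => cc g = c) (fun g hg h1 => by have := cl g hg; tauto)
  have b₄ := sub (fun g => bb g = b ∧ cc g = c') (fun g => bb g = b' ∧ cc g = c')
    (fun g => cc g = c') (fun g hg h1 => by have := cl g hg; tauto)
  have a₁ := add (fun g => bb g = b ∧ cc g = c) (fun g => bb g = b' ∧ cc g = c')
    (fun g => aa g = aa e₁) (fun g hg h1 h2 => h.left_ne (h1.1.symm.trans h2.1))
    (fun g hg => by rintro (h1 | h1); exacts [l₁ g hg h1.1 h1.2, l₂ g hg h1.1 h1.2])
  have a₃ := add (fun g => bb g = b ∧ cc g = c') (fun g => bb g = b' ∧ cc g = c)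
    (fun g => aa g = aa e₃) (fun g hg h1 h2 => h.left_ne (h1.1.symm.trans h2.1))
    (fun g hg => by rintro (h1 | h1); exacts [l₃ g hg h1.1 h1.2, l₄ g hg h1.1 h1.2])
  rw [h.deg_left b (Or.inl rfl)] at b₁
  rw [h.deg_left b' (Or.inr rfl)] at b₂
  rw [h.deg_right c (Or.inl rfl)] at b₃
  rw [h.deg_right c' (Or.inr rfl)] at b₄
  have A₁ := hA (aa e₁)
  have A₃ := hA (aa e₃)
  refine ⟨aa e₁, aa e₃, h, ?_, ?_, ?_, ?_, ?_⟩
  · intro hcon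
    have h1 := add (fun g => bb g = b) (fun g => bb g = b') (fun g => aa g = aa e₁)
      (fun g hg h1 h2 => h.left_ne (h1.symm.trans h2)) (fun g hg hg' => by
        rcases (cl g hg).1 hg' with h5 | h5 <;> rcases hg' with h6 | h6
        exacts [l₁ g hg h6 h5, (l₄ g hg h6 h5).trans hcon.symm, (l₃ g hg h6 h5).trans hcon.symm,
          l₂ g hg h6 h5])
    rw [h.deg_left b (Or.inl rfl), h.deg_left b' (Or.inr rfl)] at h1
    omega
  · rw [q₁]; omega
  · rw [q₂]; omega
  · rw [q₃]; omega
  · rw [q₄]; omega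

theorem bb_mem_of_fullPairs {P : Finset β} (hP : P ∈ fullPairs bb cc r G) {g g' : ι} (hg : g ∈ G)
    (hg' : g' ∈ G) (hb : bb g ∈ P) (hc : cc g = cc g') : bb g' ∈ P := by
  obtain ⟨b, b', c, c', rfl, h⟩ := mem_fullPairs.1 hP
  simp only [Finset.mem_insert, Finset.mem_singleton] at hb ⊢
  rw [h.closed g hg, hc] at hb
  exact (h.closed g' hg').2 hb

open Classical in
theorem card_split_le [Finite ι] [Fintype α] (hr : 2 ≤ r) (hdeg : MaxDeg bb cc r G) {S : Finset α}
    (hA : ∀ a ∈ S, (G.filter fun e => aa e = a).card = r) (hS : ∀ g ∈ G, aa g ∈ S) {ν : ℕ}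
    (hν : ∀ σ ⊆ G, IsM bb cc σ → Set.InjOn aa σ → σ.card ≤ ν) :
    ∃ m : ℕ, ((fullPairs bb cc r G).filter (IsSplit aa bb cc G)).card ≤ 2 * r * m ∧
      r * S.card + 2 * m ≤ 2 * r * ν := by
  have hA' : ∀ a, (G.filter fun e => aa e = a).card ≤ r := by
    intro a
    by_cases ha : a ∈ S
    · exact (hA a ha).le
    · rw [Finset.filter_false_of_mem]
      · simp
      · rintro g hg rfl
        exact ha (hS g hg)
  set 𝒢 := (fullPairs bb cc r G).filter (IsSplit aa bb cc G) with h𝒢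
  have h𝒢f : ∀ P ∈ 𝒢, P ∈ fullPairs bb cc r G := fun P hP => (Finset.mem_filter.1 hP).1
  rcases G.eq_empty_or_nonempty with hG | ⟨g0, hg0⟩
  · refine ⟨0, ?_, ?_⟩
    · have h1 := card_fullPairs_mul_le (bb := bb) (cc := cc) (r := r) G
      rw [hG, Finset.card_empty] at h1
      have h2 : (fullPairs bb cc r G).card = 0 := by
        rw [hG]
        by_contra h
        have := Nat.pos_of_ne_zero h
        nlinarith
      have h3 : 𝒢.card ≤ (fullPairs bb cc r G).card := Finset.card_filter_le _ _
      omega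
    · rcases S.eq_empty_or_nonempty with rfl | ⟨a, ha⟩
      · simp
      · have := hA a ha
        rw [hG] at this
        simp at this
        omega
  have hne : Nonempty ι := ⟨g0⟩
  have hch : ∀ P ∈ 𝒢, ∃ e f, e ∈ G ∧ f ∈ G ∧ bb e ∈ P ∧ bb f ∈ P ∧ bb e ≠ bb f ∧
      cc e ≠ cc f ∧ aa e ≠ aa f := by
    intro P hP
    obtain ⟨e, he, f, hf, h⟩ := (Finset.mem_filter.1 hP).2
    exact ⟨e, f, he, hf, h⟩
  choose! e f heG hfG heP hfP hbb hcc haa using hch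
  set lab : Finset β → Finset α := fun P => {aa (e P), aa (f P)} with hlab
  obtain ⟨𝒬, h𝒬, h𝒬max⟩ := Finset.exists_max_image
    (𝒢.powerset.filter fun 𝒬 : Finset (Finset β) => (𝒬 : Set (Finset β)).PairwiseDisjoint lab) Finset.card
    ⟨∅, by simp⟩
  simp only [Finset.mem_filter, Finset.mem_powerset] at h𝒬 h𝒬max
  obtain ⟨h𝒬𝒢, h𝒬d⟩ := h𝒬
  set A₀ := 𝒬.biUnion lab with hA₀
  have hA₀c : A₀.card = 2 * 𝒬.card := by
    rw [hA₀, Finset.card_biUnion (fun P hP Q hQ hPQ => h𝒬d hP hQ hPQ), mul_comm]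
    exact Finset.sum_const_nat fun P hP => Finset.card_pair (haa P (h𝒬𝒢 hP))
  have hmeet : ∀ P ∈ 𝒢, ∃ h ∈ G, bb h ∈ P ∧ aa h ∈ A₀ := by
    intro P hP
    by_cases hPQ : P ∈ 𝒬
    · exact ⟨e P, heG P hP, heP P hP, Finset.mem_biUnion.2 ⟨P, hPQ, by simp [hlab]⟩⟩
    have h1 : ¬ ((insert P 𝒬 : Finset (Finset β)) : Set (Finset β)).PairwiseDisjoint lab := by
      intro hcon
      have := h𝒬max _ ⟨Finset.insert_subset hP h𝒬𝒢, hcon⟩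
      rw [Finset.card_insert_of_notMem hPQ] at this
      omega
    rw [Finset.coe_insert, Set.pairwiseDisjoint_insert_of_notMem (by simpa using hPQ)] at h1
    push Not at h1
    obtain ⟨Q, hQ, hd⟩ := h1 h𝒬d
    rw [Finset.not_disjoint_iff] at hd
    obtain ⟨a, ha, haQ⟩ := hd
    have haA : a ∈ A₀ := Finset.mem_biUnion.2 ⟨Q, hQ, haQ⟩
    simp only [hlab, Finset.mem_insert, Finset.mem_singleton] at ha
    rcases ha with rfl | rfl
    · exact ⟨e P, heG P hP, heP P hP, haA⟩
    · exact ⟨f P, hfG P hP, hfP P hP, haA⟩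
  choose! w hwG hwP hwA using hmeet
  have hX : (G.filter fun g => aa g ∈ A₀).card ≤ 2 * 𝒬.card * r := by
    rw [← hA₀c]
    exact card_le_of_label_degree hA' A₀
  refine ⟨𝒬.card, ?_, ?_⟩
  · have h1 : 𝒢.card ≤ (G.filter fun g => aa g ∈ A₀).card := by
      refine Finset.card_le_card_of_injOn w
        (fun P hP => Finset.mem_filter.2 ⟨hwG P hP, hwA P hP⟩) ?_
      intro P hP Q hQ hPQ
      by_contra hcon
      have := fullPairs_disjoint (h𝒢f P hP) (h𝒢f Q hQ) hcon
      rw [Finset.disjoint_left] at this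
      exact this (hwP P hP) (hPQ ▸ hwP Q hQ)
    calc 𝒢.card ≤ 2 * 𝒬.card * r := h1.trans hX
      _ = 2 * r * 𝒬.card := by ring
  set E' := G.filter fun g => aa g ∉ A₀ ∧ ∀ P ∈ 𝒬, bb g ∉ P with hE'
  have hE'G : E' ⊆ G := Finset.filter_subset _ _
  obtain ⟨σ, hσE, hσM, hσA, hσc⟩ := exists_rainbow (aa := aa) hr (E := E')
    (fun a => (Finset.card_le_card (Finset.filter_subset_filter _ hE'G)).trans (hA' a))
    (hdeg.mono hE'G)
  let pick : Finset β × Bool → ι := fun x => if x.2 then e x.1 else f x.1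
  have hpG : ∀ P ∈ 𝒬, ∀ i, pick (P, i) ∈ G ∧ bb (pick (P, i)) ∈ P ∧ aa (pick (P, i)) ∈ lab P := by
    intro P hP i
    have hP' := h𝒬𝒢 hP
    cases i
    · exact ⟨hfG P hP', hfP P hP', by simp [pick, hlab]⟩
    · exact ⟨heG P hP', heP P hP', by simp [pick, hlab]⟩
  have hkey : ∀ x ∈ 𝒬 ×ˢ (Finset.univ : Finset Bool), ∀ y ∈ 𝒬 ×ˢ (Finset.univ : Finset Bool),
      x ≠ y → aa (pick x) ≠ aa (pick y) ∧ bb (pick x) ≠ bb (pick y) ∧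
        cc (pick x) ≠ cc (pick y) := by
    rintro ⟨P, i⟩ hx ⟨Q, j⟩ hy hxy
    have hP := (Finset.mem_product.1 hx).1
    have hQ := (Finset.mem_product.1 hy).1
    simp only at hP hQ
    obtain ⟨h1, h2, h3⟩ := hpG P hP i
    obtain ⟨h4, h5, h6⟩ := hpG Q hQ j
    by_cases hPQ : P = Q
    · subst hPQ
      have hP' := h𝒬𝒢 hP
      have u1 := haa P hP'
      have u2 := hbb P hP'
      have u3 := hcc P hP'
      cases i <;> cases j
      · exact absurd rfl hxy
      · exact ⟨u1.symm, u2.symm, u3.symm⟩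
      · exact ⟨u1, u2, u3⟩
      · exact absurd rfl hxy
    · have d1 := h𝒬d hP hQ hPQ
      have d2 := fullPairs_disjoint (h𝒢f P (h𝒬𝒢 hP)) (h𝒢f Q (h𝒬𝒢 hQ)) hPQ
      rw [Function.onFun, Finset.disjoint_left] at d1
      rw [Finset.disjoint_left] at d2
      refine ⟨fun h => d1 h3 (h ▸ h6), fun h => d2 h2 (h ▸ h5), fun h => ?_⟩
      exact d2 (bb_mem_of_fullPairs (h𝒢f P (h𝒬𝒢 hP)) h1 h4 h2 h) h5
  set τ := (𝒬 ×ˢ (Finset.univ : Finset Bool)).image pick with hτ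
  have hτc : τ.card = 2 * 𝒬.card := by
    rw [hτ, Finset.card_image_of_injOn, Finset.card_product, Finset.card_univ, Fintype.card_bool,
      mul_comm]
    intro x hx y hy hxy
    by_contra hcon
    exact (hkey x hx y hy hcon).1 (by rw [hxy])
  have hτmem : ∀ g ∈ τ, ∃ P ∈ 𝒬, g ∈ G ∧ bb g ∈ P ∧ aa g ∈ A₀ := by
    intro g hg
    obtain ⟨⟨P, i⟩, hx, rfl⟩ := Finset.mem_image.1 hg
    have hP := (Finset.mem_product.1 hx).1
    obtain ⟨h1, h2, h3⟩ := hpG P hP i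
    exact ⟨P, hP, h1, h2, Finset.mem_biUnion.2 ⟨P, hP, h3⟩⟩
  have hτinj : ∀ g ∈ τ, ∀ g' ∈ τ, g ≠ g' → aa g ≠ aa g' ∧ bb g ≠ bb g' ∧ cc g ≠ cc g' := by
    intro g hg g' hg' hne
    obtain ⟨x, hx, rfl⟩ := Finset.mem_image.1 hg
    obtain ⟨y, hy, rfl⟩ := Finset.mem_image.1 hg'
    exact hkey x hx y hy fun h => hne (by rw [h])
  have hcross : ∀ g ∈ σ, ∀ g' ∈ τ, aa g ≠ aa g' ∧ bb g ≠ bb g' ∧ cc g ≠ cc g' := by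
    intro g hg g' hg'
    obtain ⟨hgG, hgA, hgP⟩ := Finset.mem_filter.1 (hσE hg)
    obtain ⟨P, hP, h1, h2, h3⟩ := hτmem g' hg'
    refine ⟨fun h => hgA (h ▸ h3), fun h => hgP P hP (h ▸ h2), fun h => hgP P hP ?_⟩
    exact bb_mem_of_fullPairs (h𝒢f P (h𝒬𝒢 hP)) h1 hgG h2 h.symm
  have hdisj : Disjoint σ τ := by
    rw [Finset.disjoint_left]
    intro g hg hg'
    exact (hcross g hg g hg').1 rfl
  have hdisj' : Disjoint (σ : Set ι) (τ : Set ι) := by exact_mod_cast hdisj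
  have hM : IsM bb cc (σ ∪ τ) := by
    constructor
    · rw [Finset.coe_union, Set.injOn_union hdisj']
      refine ⟨hσM.1, fun x hx y hy hxy => ?_, fun x hx y hy => (hcross x hx y hy).2.1⟩
      by_contra hcon
      exact (hτinj x hx y hy hcon).2.1 hxy
    · rw [Finset.coe_union, Set.injOn_union hdisj']
      refine ⟨hσM.2, fun x hx y hy hxy => ?_, fun x hx y hy => (hcross x hx y hy).2.2⟩
      by_contra hcon
      exact (hτinj x hx y hy hcon).2.2 hxy
  have hInj : Set.InjOn aa (σ ∪ τ : Finset ι) := by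
    rw [Finset.coe_union, Set.injOn_union hdisj']
    refine ⟨hσA, fun x hx y hy hxy => ?_, fun x hx y hy => (hcross x hx y hy).1⟩
    by_contra hcon
    exact (hτinj x hx y hy hcon).1 hxy
  have hfin := hν (σ ∪ τ) (Finset.union_subset (hσE.trans hE'G) fun g hg => by
    obtain ⟨P, _, h, _⟩ := hτmem g hg
    exact h) hM hInj
  rw [Finset.card_union_of_disjoint hdisj, hτc] at hfin
  have hGc : G.card = S.card * r := by
    rw [Finset.card_eq_sum_card_fiberwise (f := aa) (t := S) hS]
    exact Finset.sum_const_nat hA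
  have hY : (G.filter fun g => bb g ∈ 𝒬.biUnion id).card ≤ 2 * 𝒬.card * r := by
    refine (hdeg.card_left _).trans (Nat.mul_le_mul_right _ ?_)
    rw [mul_comm]
    refine Finset.card_biUnion_le_card_mul _ _ _ fun P hP => ?_
    obtain ⟨b, b', c, c', rfl, h⟩ := mem_fullPairs.1 (h𝒢f P (h𝒬𝒢 hP))
    exact (Finset.card_pair h.left_ne).le
  have hcov : G ⊆ E' ∪ ((G.filter fun g => aa g ∈ A₀) ∪
      (G.filter fun g => bb g ∈ 𝒬.biUnion id)) := by
    intro g hg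
    simp only [hE', Finset.mem_union, Finset.mem_filter, Finset.mem_biUnion, id]
    by_cases h1 : aa g ∈ A₀
    · tauto
    by_cases h2 : ∃ P ∈ 𝒬, bb g ∈ P
    · tauto
    push Not at h2
    tauto
  have hcap : τ ⊆ (G.filter fun g => aa g ∈ A₀) ∩ (G.filter fun g => bb g ∈ 𝒬.biUnion id) := by
    intro g hg
    obtain ⟨P, hP, h1, h2, h3⟩ := hτmem g hg
    simp only [Finset.mem_inter, Finset.mem_filter, Finset.mem_biUnion, id]
    exact ⟨⟨h1, h3⟩, h1, P, hP, h2⟩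
  have c1 := Finset.card_le_card hcov
  have c2 := Finset.card_le_card hcap
  have c3 := Finset.card_union_le E' ((G.filter fun g => aa g ∈ A₀) ∪
      (G.filter fun g => bb g ∈ 𝒬.biUnion id))
  have c4 := Finset.card_union_add_card_inter (G.filter fun g => aa g ∈ A₀)
      (G.filter fun g => bb g ∈ 𝒬.biUnion id)
  have c5 : 2 * r * (σ.card + 2 * 𝒬.card) ≤ 2 * r * ν := Nat.mul_le_mul_left _ hfin
  rw [hτc] at c2
  nlinarith

end Rainbow

section Rainbow

variable {ι α β γ : Type*} [DecidableEq ι] [DecidableEq α] [DecidableEq β] [DecidableEq γ]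
variable {aa : ι → α} {bb : ι → β} {cc : ι → γ}
variable {r : ℕ} {G : Finset ι}

theorem FanoAt.label_card {x y : α} {b b' : β} {c c' : γ}
    (h : FanoAt aa bb cc r G x y b b' c c') {a : α} (ha : a = x ∨ a = y) :
    r ≤ (G.filter fun g => aa g = a ∧ bb g ∈ ({b, b'} : Finset β)).card := by
  have add : ∀ d d', (G.filter fun g => aa g = a ∧ bb g = b ∧ cc g = d).card +
      (G.filter fun g => aa g = a ∧ bb g = b' ∧ cc g = d').card ≤
      (G.filter fun g => aa g = a ∧ bb g ∈ ({b, b'} : Finset β)).card := by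
    intro d d'
    rw [← Finset.card_union_of_disjoint]
    · refine Finset.card_le_card fun g => ?_
      simp only [Finset.mem_union, Finset.mem_filter, Finset.mem_insert, Finset.mem_singleton]
      tauto
    · rw [Finset.disjoint_left]
      intro g hg hg'
      rw [Finset.mem_filter] at hg hg'
      exact h.full.left_ne (hg.2.2.1.symm.trans hg'.2.2.1)
  rcases ha with rfl | rfl
  · have h1 := h.card₁
    have h2 := h.card₂
    have := add c c'
    omega
  · have h1 := h.card₃
    have h2 := h.card₄
    have := add c' c
    omega

theorem FanoAt.disjoint (hr : 2 ≤ r) (hA : ∀ a, (G.filter fun e => aa e = a).card ≤ r)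
    {x y x₁ y₁ : α} {b b' b₁ b₁' : β} {c c' c₁ c₁' : γ}
    (h : FanoAt aa bb cc r G x y b b' c c') (h' : FanoAt aa bb cc r G x₁ y₁ b₁ b₁' c₁ c₁')
    (hne : ({b, b'} : Finset β) ≠ {b₁, b₁'}) :
    ({x, y} : Finset α) ∩ {x₁, y₁} = ∅ ∧ ({b, b'} : Finset β) ∩ {b₁, b₁'} = ∅ ∧
      ({c, c'} : Finset γ) ∩ {c₁, c₁'} = ∅ := by
  have hP : ({b, b'} : Finset β) ∈ fullPairs bb cc r G :=
    mem_fullPairs.2 ⟨b, b', c, c', rfl, h.full⟩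
  have hd := fullPairs_disjoint hP (mem_fullPairs.2 ⟨b₁, b₁', c₁, c₁', rfl, h'.full⟩) hne
  refine ⟨?_, Finset.disjoint_iff_inter_eq_empty.1 hd, ?_⟩
  · rw [← Finset.disjoint_iff_inter_eq_empty, Finset.disjoint_left]
    intro a ha ha'
    have h1 := h.label_card (by simpa using ha)
    have h2 := h'.label_card (by simpa using ha')
    have h3 : (G.filter fun g => aa g = a ∧ bb g ∈ ({b, b'} : Finset β)).card +
        (G.filter fun g => aa g = a ∧ bb g ∈ ({b₁, b₁'} : Finset β)).card ≤
        (G.filter fun g => aa g = a).card := by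
      rw [← Finset.card_union_of_disjoint]
      · refine Finset.card_le_card fun g => ?_
        simp only [Finset.mem_union, Finset.mem_filter]
        tauto
      · rw [Finset.disjoint_left] at hd ⊢
        intro g hg hg'
        exact hd (Finset.mem_filter.1 hg).2.2 (Finset.mem_filter.1 hg').2.2
    have := hA a
    omega
  · rw [← Finset.disjoint_iff_inter_eq_empty, Finset.disjoint_left]
    rw [Finset.disjoint_left] at hd
    intro d hdc hdc'
    obtain ⟨g, hg, hgb, hgd⟩ := h.full.edge b d (Or.inl rfl) (by simpa using hdc)
    have h1 := (h'.full.closed g hg).2 (by rw [hgd]; simpa using hdc')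
    rw [hgb] at h1
    exact hd (Finset.mem_insert_self b _) (by simpa using h1)

/-- A tripartite edge set with label degrees `r`, other degrees at most `r` and small matching
number contains many disjoint truncated Fano planes. -/
theorem exists_fano_family [Finite ι] [Fintype α] (hr : 2 ≤ r) {E : Finset ι}
    (hA : ∀ a, (E.filter fun e => aa e = a).card = r) (hdeg : MaxDeg bb cc r E) {ν : ℕ}
    (hν : ∀ σ ⊆ E, IsM bb cc σ → Set.InjOn aa σ → σ.card ≤ ν) :
    ∃ G ⊆ E, ∃ T : Finset (α × α × β × β × γ × γ),
      (∀ t ∈ T, FanoAt aa bb cc r G t.1 t.2.1 t.2.2.1 t.2.2.2.1 t.2.2.2.2.1 t.2.2.2.2.2) ∧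
      (∀ t ∈ T, ∀ t' ∈ T, t ≠ t' →
        ({t.1, t.2.1} : Finset α) ∩ {t'.1, t'.2.1} = ∅ ∧
        ({t.2.2.1, t.2.2.2.1} : Finset β) ∩ {t'.2.2.1, t'.2.2.2.1} = ∅ ∧
        ({t.2.2.2.2.1, t.2.2.2.2.2} : Finset γ) ∩ {t'.2.2.2.2.1, t'.2.2.2.2.2} = ∅) ∧
      Fintype.card α ≤ 2 * ν ∧
      (Fintype.card α : ℤ) ≤ 2 * T.card + 16 * (r : ℤ) ^ 2 * (2 * ν - Fintype.card α) := by
  classical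
  obtain ⟨S, hS⟩ := exists_deficient_set bb cc E aa ν hν
  set G := E.filter fun e => aa e ∈ S with hG
  have hGE : G ⊆ E := Finset.filter_subset _ _
  have hGA : ∀ a ∈ S, (G.filter fun e => aa e = a).card = r := by
    intro a ha
    rw [← hA a, hG, Finset.filter_filter]
    congr 1
    refine Finset.filter_congr fun e _ => ⟨fun h => h.2, fun h => ⟨h ▸ ha, h⟩⟩
  have hGS : ∀ g ∈ G, aa g ∈ S := fun g hg => (Finset.mem_filter.1 hg).2
  have hGA' : ∀ a, (G.filter fun e => aa e = a).card ≤ r := fun a =>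
    (Finset.card_le_card (Finset.filter_subset_filter _ hGE)).trans (hA a).le
  have hGd := hdeg.mono hGE
  obtain ⟨m, hm1, hm2⟩ := card_split_le hr hGd hGA hGS fun σ hσ => hν σ (hσ.trans hGE)
  obtain ⟨k, hk, hg⟩ := est_potential hr G hGd
  have h1 := hS k hg
  have h2 := mul_card_le_potential hr hGd
  have h3 := card_fullPairs_mul_le (bb := bb) (cc := cc) (r := r) G
  have hGc : G.card = S.card * r := by
    rw [Finset.card_eq_sum_card_fiberwise (f := aa) (t := S) hGS]
    exact Finset.sum_const_nat hGA
  have hEc : E.card = Fintype.card α * r := by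
    rw [Finset.card_eq_sum_card_fiberwise (f := aa) (t := Finset.univ) fun _ _ => by simp,
      ← Finset.card_univ]
    exact Finset.sum_const_nat fun a _ => hA a
  obtain ⟨σ, hσE, hσM, hσA, hσc⟩ := exists_rainbow hr (fun a => (hA a).le) hdeg
  have h4 : Fintype.card α ≤ 2 * ν := by
    have := hν σ hσE hσM hσA
    rw [hEc] at hσc
    refine Nat.le_of_mul_le_mul_right (c := r) ?_ (by omega)
    nlinarith
  have h5 : S.card ≤ Fintype.card α := Finset.card_le_univ S
  set 𝒢 := (fullPairs bb cc r G).filter (IsSplit aa bb cc G) with h𝒢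
  set 𝓕 := (fullPairs bb cc r G).filter (fun P => ¬ IsSplit aa bb cc G P) with h𝓕
  have h6 : 𝒢.card + 𝓕.card = (fullPairs bb cc r G).card :=
    Finset.card_filter_add_card_filter_not _
  have hch : ∀ P : 𝓕, ∃ t : α × α × β × β × γ × γ, (P : Finset β) = {t.2.2.1, t.2.2.2.1} ∧
      FanoAt aa bb cc r G t.1 t.2.1 t.2.2.1 t.2.2.2.1 t.2.2.2.2.1 t.2.2.2.2.2 := by
    rintro ⟨P, hP⟩
    obtain ⟨hP1, hP2⟩ := Finset.mem_filter.1 hP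
    obtain ⟨b, b', c, c', rfl, h⟩ := mem_fullPairs.1 hP1
    obtain ⟨x, y, hxy⟩ := exists_fanoAt hr hGA' h hP2
    exact ⟨(x, y, b, b', c, c'), rfl, hxy⟩
  choose t htP ht using hch
  have htinj : Function.Injective t := fun P Q hPQ => by
    apply Subtype.ext
    rw [htP P, htP Q, hPQ]
  refine ⟨G, hGE, Finset.univ.image t, ?_, ?_, h4, ?_⟩
  · intro u hu
    obtain ⟨P, _, rfl⟩ := Finset.mem_image.1 hu
    exact ht P
  · intro u hu u' hu' hne
    obtain ⟨P, _, rfl⟩ := Finset.mem_image.1 hu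
    obtain ⟨Q, _, rfl⟩ := Finset.mem_image.1 hu'
    refine (ht P).disjoint hr hGA' (ht Q) fun h => hne ?_
    rw [← htP P, ← htP Q] at h
    rw [Subtype.ext h]
  · rw [Finset.card_image_of_injective _ htinj, Finset.card_univ, Fintype.card_coe]
    have hr' : (2 : ℤ) ≤ r := by exact_mod_cast hr
    have hr0 : (0 : ℤ) < r := by omega
    zify at h1 h3 h4 h5 h6 hm1 hm2 hGc
    set n : ℤ := (Fintype.card α : ℤ)
    set s : ℤ := (S.card : ℤ)
    set q : ℤ := ((fullPairs bb cc r G).card : ℤ)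
    have a1 : 2 * q ≤ s := by
      refine le_of_mul_le_mul_right (a := (r : ℤ)) ?_ hr0
      linarith
    have a2 : (12 * (r : ℤ) ^ 2 + 1) * s - 2 * q ≤ potential bb cc r G := by
      refine le_of_mul_le_mul_left (a := (r : ℤ)) ?_ hr0
      rw [hGc] at h2
      linarith
    have hr2 : (0 : ℤ) < 12 * (r : ℤ) ^ 2 := by positivity
    have a3 : 12 * (r : ℤ) ^ 2 * s ≤ 12 * (r : ℤ) ^ 2 * (2 * (s + ν - n)) := by
      nlinarith
    have a4 : s ≤ 2 * (s + ν - n) := le_of_mul_le_mul_left a3 hr2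
    have a5 : n - 12 * (r : ℤ) ^ 2 * (2 * ν - n) ≤ 2 * q := by
      nlinarith
    have a6 : (m : ℤ) ≤ r * (2 * ν - n) := by nlinarith
    have a7 : (𝒢.card : ℤ) ≤ 2 * r * (r * (2 * ν - n)) := by nlinarith
    nlinarith

end Rainbow

theorem exists_label_trimming {ι α : Type*} [Fintype ι] [Fintype α] [DecidableEq α] {aa : ι → α}
    {r : ℕ} (h : ∀ a, r ≤ (Finset.univ.filter fun i => aa i = a).card) :
    ∃ E : Finset ι, ∀ a, (E.filter fun i => aa i = a).card = r := by
  classical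
  choose S hS hcard using fun a => Finset.exists_subset_card_eq (h a)
  refine ⟨Finset.univ.biUnion S, fun a => ?_⟩
  rw [← hcard a]
  congr 1
  ext i
  have hmem : ∀ {a}, i ∈ S a → aa i = a := fun hi => (Finset.mem_filter.1 (hS _ hi)).2
  simp only [Finset.mem_filter, Finset.mem_biUnion, Finset.mem_univ, true_and]
  constructor
  · rintro ⟨⟨a', hi⟩, rfl⟩
    rwa [hmem hi]
  · exact fun hi => ⟨⟨a, hi⟩, hmem hi⟩

section Transfer

variable {α β γ : Type*} [DecidableEq α] [DecidableEq β] [DecidableEq γ]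

theorem card_filter_coe (H : Multiset (α × β × γ)) (p : α × β × γ → Prop) [DecidablePred p] :
    (Finset.univ.filter fun i : H => p i.1).card = (H.filter p).card := by
  conv_rhs => rw [← Multiset.map_univ_coe H, Multiset.filter_map, Multiset.card_map]
  rfl

theorem card_le_matchNum {H : Multiset (α × β × γ)} {M : Finset (α × β × γ)}
    (hM : IsMatching H M) : M.card ≤ matchNum H := by
  refine le_csSup ⟨H.toFinset.card, ?_⟩ ⟨M, hM, rfl⟩
  rintro k ⟨M', hM', rfl⟩
  exact Finset.card_le_card fun e he => Multiset.mem_toFinset.2 (hM'.1 e he)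

theorem card_le_matchNum_of_injOn {H : Multiset (α × β × γ)} {σ : Finset H}
    (hbc : IsM (fun i : H => i.1.2.1) (fun i : H => i.1.2.2) σ)
    (ha : Set.InjOn (fun i : H => i.1.1) σ) : σ.card ≤ matchNum H := by
  have hinj : Set.InjOn (fun i : H => i.1) σ := fun i hi j hj h => ha hi hj (congrArg Prod.fst h)
  rw [← Finset.card_image_of_injOn hinj]
  refine card_le_matchNum ⟨fun e he => ?_, fun e he f hf hne => ?_⟩
  · obtain ⟨i, _, rfl⟩ := Finset.mem_image.1 he
    exact Multiset.coe_mem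
  · obtain ⟨i, hi, rfl⟩ := Finset.mem_image.1 he
    obtain ⟨j, hj, rfl⟩ := Finset.mem_image.1 hf
    exact ⟨fun h => hne (congrArg (fun k : H => k.1) (ha hi hj h)),
      fun h => hne (congrArg (fun k : H => k.1) (hbc.1 hi hj h)),
      fun h => hne (congrArg (fun k : H => k.1) (hbc.2 hi hj h))⟩

theorem card_triple_le_count {H : Multiset (α × β × γ)} (G : Finset H) (a : α) (b : β) (c : γ) :
    (G.filter fun i : H => i.1.1 = a ∧ i.1.2.1 = b ∧ i.1.2.2 = c).card ≤ H.count (a, b, c) := by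
  rw [Multiset.count_eq_card_filter_eq, ← card_filter_coe]
  refine Finset.card_le_card fun i hi => ?_
  obtain ⟨_, h₁, h₂, h₃⟩ := Finset.mem_filter.1 hi
  exact Finset.mem_filter.2 ⟨Finset.mem_univ _, (Prod.ext h₁ (Prod.ext h₂ h₃)).symm⟩

theorem FanoAt.isFanoCopy {H : Multiset (α × β × γ)} {r s : ℕ} {G : Finset H} {x y : α}
    {b b' : β} {c c' : γ}
    (h : FanoAt (fun i : H => i.1.1) (fun i : H => i.1.2.1) (fun i : H => i.1.2.2) r G x y b b' c c')
    (hs : 2 * s = r) : IsFanoCopy H s x y b b' c c' := by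
  refine ⟨h.ne, h.full.left_ne, h.full.right_ne, Multiset.le_iff_count.2 fun e => ?_⟩
  have hnodup : (fanoEdges x y b b' c c').Nodup := by
    simp [fanoEdges, h.ne, h.full.left_ne, h.full.right_ne]
  rw [Multiset.count_nsmul]
  by_cases he : e ∈ fanoEdges x y b b' c c'
  · rw [Multiset.count_eq_one_of_mem hnodup he, mul_one]
    have h₁ := h.card₁
    have h₂ := h.card₂
    have h₃ := h.card₃
    have h₄ := h.card₄
    simp only [fanoEdges, Multiset.insert_eq_cons, Multiset.mem_cons,
      Multiset.mem_singleton] at he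
    rcases he with rfl | rfl | rfl | rfl
    · exact le_trans (by omega) (card_triple_le_count G x b c)
    · exact le_trans (by omega) (card_triple_le_count G x b' c')
    · exact le_trans (by omega) (card_triple_le_count G y b c')
    · exact le_trans (by omega) (card_triple_le_count G y b' c)
  · simp [Multiset.count_eq_zero_of_notMem he]

end Transfer

/-- Stability theorem under the weaker degree condition: if every vertex of the class `α`
(of size `n`) has degree at least `r ≥ 2`, every vertex of the other two classes has degree
at most `r`, and `ν(H) ≤ (1 + ε)·n/2`, then `H` contains at least
`(1 − (72r² − 150r + 77)ε)·n/2` pairwise (vertex-)disjoint copies of `(r/2) • F`. -/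
theorem stmt3 {α β γ : Type*} [Fintype α]
    [DecidableEq α] [DecidableEq β] [DecidableEq γ]
    (H : Multiset (α × β × γ)) (n r : ℕ) (hr : 2 ≤ r) (ε : ℝ) (hε : 0 ≤ ε)
    (hA : Fintype.card α = n)
    (hdA : ∀ a : α, r ≤ deg1 H a)
    (hdB : ∀ b : β, deg2 H b ≤ r)
    (hdC : ∀ c : γ, deg3 H c ≤ r)
    (hnu : (matchNum H : ℝ) ≤ (1 + ε) * n / 2) :
    ∃ T : Finset (α × α × β × β × γ × γ),
      (∀ t ∈ T, ∃ s : ℕ, 2 * s = r ∧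
        IsFanoCopy H s t.1 t.2.1 t.2.2.1 t.2.2.2.1 t.2.2.2.2.1 t.2.2.2.2.2) ∧
      (∀ t ∈ T, ∀ t' ∈ T, t ≠ t' →
        ({t.1, t.2.1} : Finset α) ∩ {t'.1, t'.2.1} = ∅ ∧
        ({t.2.2.1, t.2.2.2.1} : Finset β) ∩ {t'.2.2.1, t'.2.2.2.1} = ∅ ∧
        ({t.2.2.2.2.1, t.2.2.2.2.2} : Finset γ) ∩ {t'.2.2.2.2.1, t'.2.2.2.2.2} = ∅) ∧
      (1 - (72 * (r : ℝ) ^ 2 - 150 * r + 77) * ε) * n / 2 ≤ (T.card : ℝ) := by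
  classical
  subst hA
  obtain ⟨E, hE⟩ := exists_label_trimming (aa := fun i : H => i.1.1) (r := r) fun a => by
    have h := hdA a
    rwa [deg1, ← card_filter_coe] at h
  have hdeg : MaxDeg (fun i : H => i.1.2.1) (fun i : H => i.1.2.2) r E :=
    ⟨fun b => by
      have h := hdB b
      rw [deg2, ← card_filter_coe] at h
      exact (Finset.card_le_card (Finset.filter_subset_filter _ (Finset.subset_univ E))).trans h,
    fun c => by
      have h := hdC c
      rw [deg3, ← card_filter_coe] at h
      exact (Finset.card_le_card (Finset.filter_subset_filter _ (Finset.subset_univ E))).trans h⟩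
  obtain ⟨G, -, T, hfano, hdisj, hle, hcount⟩ := exists_fano_family hr hE hdeg (ν := matchNum H)
    fun σ _ hbc ha => card_le_matchNum_of_injOn hbc ha
  refine ⟨T, fun t ht => ⟨_, (hfano t ht).card₁, (hfano t ht).isFanoCopy (hfano t ht).card₁⟩,
    hdisj, ?_⟩
  have hr' : (2 : ℝ) ≤ r := by exact_mod_cast hr
  have hle' : (Fintype.card α : ℝ) ≤ 2 * matchNum H := by exact_mod_cast hle
  have hcount' : (Fintype.card α : ℝ) ≤
      2 * T.card + 16 * (r : ℝ) ^ 2 * (2 * matchNum H - Fintype.card α) := by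
    exact_mod_cast hcount
  set n : ℝ := (Fintype.card α : ℝ)
  have hdef : 2 * (matchNum H : ℝ) - n ≤ ε * n := by linarith
  have hcoef : 16 * (r : ℝ) ^ 2 ≤ 72 * (r : ℝ) ^ 2 - 150 * r + 77 := by nlinarith
  have hmul : 16 * (r : ℝ) ^ 2 * (2 * matchNum H - n) ≤
      (72 * (r : ℝ) ^ 2 - 150 * r + 77) * (ε * n) :=
    mul_le_mul hcoef hdef (by linarith) (by nlinarith)
  linarith

end Tripartite
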